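/- arXiv:1606.07573 — 12 statements merged into one kernel-verified Lean document; each statement's English description precedes it below -/
import Mathlib

section
/- Let B = ℓ²(ℕ;ℝ), let S : B → B be the right shift ((Su)₀ = 0 and (Su)_{n+1} = u_n), let (m_n)_{n∈ℕ} be a nonincreasing sequence of real numbers with m₁ ≤ 2 and m_n → 1 as n → ∞, let M : B → B be the multiplication operator (Mu)_n = m_n u_n, and for p > 0 define 𝓕(u) = (1 − ‖u‖^p) · (MS)u. Then the origin u = 0 is a stable fixed point of the iteration u_{n+1} = 𝓕(u_n): for every ε ∈ (0,1) there exists δ > 0 such that every solution with ‖u₀‖ ≤ δ satisfies ‖u_n‖ < ε for all n ∈ ℕ. -/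
/-- Coordinatewise domination of `w` by `c` times the right shift of `u` bounds the `ℓ²` norms. -/
lemma lp_norm_le_of_shift_le (u w : lp (fun _ : ℕ => ℝ) 2) {c : ℝ} (hc : 0 ≤ c)
    (hw0 : w 0 = 0) (hw : ∀ k, |w (k + 1)| ≤ c * |u k|) : ‖w‖ ≤ c * ‖u‖ := by
  have hsq (v : lp (fun _ : ℕ => ℝ) 2) : HasSum (fun k => |v k| ^ 2) (‖v‖ ^ 2) := by
    simpa using lp.hasSum_norm (p := 2) (by norm_num) v
  refine le_of_pow_le_pow_left₀ two_ne_zero (by positivity) ?_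
  have hshift : HasSum (fun k => |w (k + 1)| ^ 2) (‖w‖ ^ 2) := by
    simpa [hw0] using (hasSum_nat_add_iff' 1).mpr (hsq w)
  rw [mul_pow]
  refine hasSum_le (fun k => ?_) hshift ((hsq u).mul_left (c ^ 2))
  rw [← mul_pow]
  exact pow_le_pow_left₀ (abs_nonneg _) (hw k) 2

/-- A weighted shift with nonincreasing weights `m ≥ 0` has norm at most `m (n + 1)` on the
sequences whose first `n` coordinates vanish. -/
lemma norm_weighted_shift_le {m : ℕ → ℝ} (hm_anti : Antitone m) (hm_nonneg : ∀ n, 0 ≤ m n)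
    {u w : lp (fun _ : ℕ => ℝ) 2} (hw0 : w 0 = 0) (hw : ∀ k, w (k + 1) = m (k + 1) * u k)
    {n : ℕ} (hu : ∀ k < n, u k = 0) : ‖w‖ ≤ m (n + 1) * ‖u‖ := by
  refine lp_norm_le_of_shift_le u w (hm_nonneg _) hw0 fun k => ?_
  rw [hw, abs_mul, abs_of_nonneg (hm_nonneg _)]
  rcases lt_or_ge k n with hk | hk
  · simp [hu k hk]
  · exact mul_le_mul_of_nonneg_right (hm_anti (by omega)) (abs_nonneg _)

/-- Scalar comparison principle: if `r` at most doubles in each step while it is below `1`, and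
the nonlinear damping eventually beats the growth factors `a n → 1`, then small initial values
stay small, uniformly in `r`. -/
lemma exists_delta_of_damped_growth {a : ℕ → ℝ} (ha_nonneg : ∀ n, 0 ≤ a n) (ha : ∀ n, a n ≤ 2)
    (ha_lim : Filter.Tendsto a Filter.atTop (nhds 1)) {p : ℝ} (hp : 0 < p)
    {ε : ℝ} (hε : ε ∈ Set.Ioo (0 : ℝ) 1) :
    ∃ δ > 0, ∀ r : ℕ → ℝ, (∀ n, 0 ≤ r n) →
      (∀ n, r n < 1 → r (n + 1) ≤ (1 - r n ^ p) * (a n * r n)) →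
      r 0 ≤ δ → ∀ n, r n < ε := by
  obtain ⟨hε0, hε1⟩ := hε
  have hpow : 0 < (ε / 4) ^ p := Real.rpow_pos_of_pos (by positivity) p
  have hlim : Filter.Tendsto (fun n => (1 - (ε / 4) ^ p) * a n) Filter.atTop
      (nhds (1 - (ε / 4) ^ p)) := by
    simpa using ha_lim.const_mul (1 - (ε / 4) ^ p)
  obtain ⟨N, hN⟩ := Filter.eventually_atTop.mp (hlim.eventually_le_const (by linarith :
    1 - (ε / 4) ^ p < 1))
  refine ⟨ε / 4 / 2 ^ N, by positivity, fun r hr hstep h0 => ?_⟩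
  have hinv : ∀ n, r n ≤ ε / 2 ∧ (n ≤ N → r n ≤ 2 ^ n * (ε / 4 / 2 ^ N)) := by
    have hquarter {n : ℕ} (hn : n ≤ N) : 2 ^ n * (ε / 4 / 2 ^ N) ≤ ε / 4 := by
      have : (2 : ℝ) ^ n ≤ 2 ^ N := pow_le_pow_right₀ (by norm_num) hn
      rw [mul_div_assoc', div_le_iff₀ (by positivity), mul_comm]
      gcongr
    intro n
    induction n with
    | zero =>
      have := hquarter N.zero_le
      simp only [pow_zero, one_mul] at this ⊢
      exact ⟨by linarith, fun _ => h0⟩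
    | succ n ih =>
      obtain ⟨ih_half, ih_pow⟩ := ih
      have hs := hstep n (by linarith)
      have har : 0 ≤ a n * r n := mul_nonneg (ha_nonneg n) (hr n)
      have hdouble : r (n + 1) ≤ 2 * r n := by
        have h1 := mul_nonneg (Real.rpow_nonneg (hr n) p) har
        have h2 := mul_le_mul_of_nonneg_right (ha n) (hr n)
        linarith
      refine ⟨?_, fun hn => ?_⟩
      · rcases le_or_gt (r n) (ε / 4) with hsmall | hlarge
        · linarith
        · have hNn : N ≤ n := by
            by_contra! hlt
            linarith [ih_pow hlt.le, hquarter hlt.le]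
          have hmono : (ε / 4) ^ p ≤ r n ^ p :=
            Real.rpow_le_rpow (by positivity) hlarge.le hp.le
          have h1 := mul_le_mul_of_nonneg_right hmono har
          have h2 := mul_le_mul_of_nonneg_right (hN n hNn) (hr n)
          linarith
      · have := ih_pow (by omega)
        rw [pow_succ]
        linarith
  intro n
  linarith [(hinv n).1]

/-- nonlinear stabilization of the map `𝓕(u) = (1 - ‖u‖^p) • (MS)u`
on `B = ℓ²(ℕ;ℝ)`: the origin is a Lyapunov-stable fixed point of the iteration. -/
theorem stmt_0 (m : ℕ → ℝ) (hm_anti : Antitone m) (hm1 : m 1 ≤ 2)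
    (hm_lim : Filter.Tendsto m Filter.atTop (nhds 1))
    (S M : lp (fun _ : ℕ => ℝ) 2 →L[ℝ] lp (fun _ : ℕ => ℝ) 2)
    (hS0 : ∀ u : lp (fun _ : ℕ => ℝ) 2, S u 0 = 0)
    (hS : ∀ (u : lp (fun _ : ℕ => ℝ) 2) (n : ℕ), S u (n + 1) = u n)
    (hM : ∀ (u : lp (fun _ : ℕ => ℝ) 2) (n : ℕ), M u n = m n * u n)
    (p : ℝ) (hp : 0 < p)
    (F : lp (fun _ : ℕ => ℝ) 2 → lp (fun _ : ℕ => ℝ) 2)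
    (hF : ∀ u, F u = (1 - ‖u‖ ^ p) • M (S u)) :
    ∀ ε ∈ Set.Ioo (0 : ℝ) 1, ∃ δ > 0, ∀ u : ℕ → lp (fun _ : ℕ => ℝ) 2,
      (∀ n, u (n + 1) = F (u n)) → ‖u 0‖ ≤ δ → ∀ n, ‖u n‖ < ε := by
  intro ε hε
  have hm_nonneg (n : ℕ) : 0 ≤ m n := zero_le_one.trans (hm_anti.le_of_tendsto hm_lim n)
  obtain ⟨δ, hδ, H⟩ := exists_delta_of_damped_growth (a := fun n => m (n + 1))
    (fun n => hm_nonneg _) (fun n => (hm_anti (by omega)).trans hm1)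
    ((Filter.tendsto_add_atTop_iff_nat 1).mpr hm_lim) hp hε
  refine ⟨δ, hδ, fun u hu h0 => H (fun n => ‖u n‖) (fun n => norm_nonneg _) (fun n hn => ?_) h0⟩
  have hvanish : ∀ n, ∀ k < n, u n k = 0 := by
    intro n
    induction n with
    | zero => simp
    | succ n ih =>
      intro k hk
      rw [hu, hF, lp.coeFn_smul, Pi.smul_apply, hM]
      cases k with
      | zero => simp [hS0]
      | succ k => simp [hS, ih k (by omega)]
  have hdamp : 0 ≤ 1 - ‖u n‖ ^ p :=
    sub_nonneg.mpr (Real.rpow_le_one (norm_nonneg _) hn.le hp.le)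
  simp only [hu, hF, norm_smul, Real.norm_of_nonneg hdamp]
  refine mul_le_mul_of_nonneg_left ?_ hdamp
  exact norm_weighted_shift_le hm_anti hm_nonneg (by rw [hM, hS0, mul_zero])
    (fun k => by rw [hM, hS]) (hvanish n)
end

section
/- Let B = ℓ²(ℕ;ℝ), let S be the right shift, let (m_n) be a nonincreasing sequence of real numbers with m_n → 1 as n → ∞, and let M be the associated multiplication operator. Then the spectral radius of the bounded linear operator MS on B is equal to 1. -/
/-- A weighted right shift by `n` places with weights bounded by `C` has norm at most `C` on `ℓ²`. -/
theorem lp_norm_le_of_shift {C : ℝ} (hC : 0 ≤ C) (n : ℕ) (u v : lp (fun _ : ℕ => ℝ) 2)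
    (hv : ∀ k < n, v k = 0) (huv : ∀ k, |v (k + n)| ≤ C * |u k|) : ‖v‖ ≤ C * ‖u‖ := by
  have norm_sq (w : lp (fun _ : ℕ => ℝ) 2) : HasSum (fun k => w k ^ 2) (‖w‖ ^ 2) := by
    simpa using lp.hasSum_norm (p := 2) (by norm_num) w
  have hsum : ∑ k ∈ Finset.range n, v k ^ 2 = 0 :=
    Finset.sum_eq_zero fun k hk => by simp [hv k (Finset.mem_range.mp hk)]
  have hshift : HasSum (fun k => v (k + n) ^ 2) (‖v‖ ^ 2) := by
    have := (hasSum_nat_add_iff' n).mpr (norm_sq v)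
    rwa [hsum, sub_zero] at this
  refine le_of_sq_le_sq ?_ (by positivity)
  rw [mul_pow]
  refine hasSum_le (fun k => ?_) hshift ((norm_sq u).mul_left (C ^ 2))
  rw [← sq_abs (v (k + n)), ← sq_abs (u k), ← mul_pow]
  exact pow_le_pow_left₀ (abs_nonneg _) (huv k) 2

/-- The geometric means of a sequence of reals in `[1, ∞)` tending to `1` tend to `1`. -/
theorem tendsto_prod_rpow_one_div {a : ℕ → ℝ} (ha : ∀ n, 1 ≤ a n)
    (hlim : Filter.Tendsto a Filter.atTop (nhds 1)) :
    Filter.Tendsto (fun n : ℕ => (∏ i ∈ Finset.range n, a i) ^ (1 / n : ℝ))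
      Filter.atTop (nhds 1) := by
  have hlog := (hlim.log one_ne_zero).cesaro
  have hexp := (Real.continuous_exp.tendsto _).comp hlog
  rw [Real.log_one, Real.exp_zero] at hexp
  refine hexp.congr fun n => ?_
  have hpos : ∀ i, 0 < a i := fun i => one_pos.trans_le (ha i)
  rw [Real.rpow_def_of_pos (Finset.prod_pos fun i _ => hpos i),
    Real.log_prod fun i _ => (hpos i).ne']
  simp [mul_comm]

/-- the spectral radius of `MS` on `ℓ²(ℕ;ℝ)`, computed via Gelfand's
formula `r(T) = lim ‖Tⁿ‖^{1/n}`, equals `1`. -/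
theorem stmt_2 (m : ℕ → ℝ) (hm_anti : Antitone m)
    (hm_lim : Filter.Tendsto m Filter.atTop (nhds 1))
    (S M : lp (fun _ : ℕ => ℝ) 2 →L[ℝ] lp (fun _ : ℕ => ℝ) 2)
    (hS0 : ∀ u : lp (fun _ : ℕ => ℝ) 2, S u 0 = 0)
    (hS : ∀ (u : lp (fun _ : ℕ => ℝ) 2) (n : ℕ), S u (n + 1) = u n)
    (hM : ∀ (u : lp (fun _ : ℕ => ℝ) 2) (n : ℕ), M u n = m n * u n) :
    Filter.Tendsto (fun n : ℕ => ‖(M ∘L S) ^ n‖ ^ (1 / n : ℝ))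
      Filter.atTop (nhds 1) := by
  have hm : ∀ n, 1 ≤ m n := fun n => hm_anti.le_of_tendsto hm_lim n
  have hpow_succ (n : ℕ) (u : lp (fun _ : ℕ => ℝ) 2) :
      ((M ∘L S) ^ (n + 1)) u = M (S (((M ∘L S) ^ n) u)) := by
    rw [pow_succ']; rfl
  have hzero (n : ℕ) (u : lp (fun _ : ℕ => ℝ) 2) : ∀ k < n, ((M ∘L S) ^ n) u k = 0 := by
    induction n with
    | zero => simp
    | succ n ih =>
      intro k hk
      rw [hpow_succ, hM]
      cases k with
      | zero => rw [hS0, mul_zero]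
      | succ k => rw [hS, ih k (by lia), mul_zero]
  have hshift (n : ℕ) (u : lp (fun _ : ℕ => ℝ) 2) (k : ℕ) :
      ((M ∘L S) ^ n) u (k + n) = (∏ i ∈ Finset.range n, m (k + i + 1)) * u k := by
    induction n with
    | zero => simp
    | succ n ih =>
      rw [hpow_succ, hM, ← add_assoc, hS, ih, Finset.prod_range_succ]
      ring
  have hprod (n k : ℕ) : 1 ≤ ∏ i ∈ Finset.range n, m (k + i + 1) :=
    Finset.one_le_prod fun i _ => hm _
  have hlower (n : ℕ) : 1 ≤ ‖(M ∘L S) ^ n‖ := by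
    let e : lp (fun _ : ℕ => ℝ) 2 := lp.single 2 0 1
    have he : ‖e‖ = 1 := by simp [e, lp.norm_single]
    calc (1 : ℝ) ≤ ∏ i ∈ Finset.range n, m (0 + i + 1) := hprod n 0
      _ = ((M ∘L S) ^ n) e (0 + n) := by rw [hshift]; simp [e]
      _ ≤ ‖((M ∘L S) ^ n) e (0 + n)‖ := Real.le_norm_self _
      _ ≤ ‖((M ∘L S) ^ n) e‖ := lp.norm_apply_le_norm two_ne_zero _ _
      _ ≤ ‖(M ∘L S) ^ n‖ := by simpa [he] using ((M ∘L S) ^ n).le_opNorm e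
  have hupper (n : ℕ) : ‖(M ∘L S) ^ n‖ ≤ ∏ i ∈ Finset.range n, m (i + 1) := by
    have hnonneg : 0 ≤ ∏ i ∈ Finset.range n, m (i + 1) :=
      Finset.prod_nonneg fun i _ => zero_le_one.trans (hm _)
    refine ContinuousLinearMap.opNorm_le_bound _ hnonneg fun u => ?_
    refine lp_norm_le_of_shift hnonneg n u _ (hzero n u) fun k => ?_
    rw [hshift, abs_mul, abs_of_nonneg (zero_le_one.trans (hprod n k))]
    refine mul_le_mul_of_nonneg_right ?_ (abs_nonneg _)
    exact Finset.prod_le_prod (fun i _ => zero_le_one.trans (hm _))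
      fun i _ => hm_anti (by lia)
  refine tendsto_of_tendsto_of_tendsto_of_le_of_le tendsto_const_nhds
    (tendsto_prod_rpow_one_div (fun n => hm (n + 1))
      ((Filter.tendsto_add_atTop_iff_nat 1).mpr hm_lim)) (fun n => ?_) fun n => ?_
  · exact Real.one_le_rpow (hlower n) (by positivity)
  · exact Real.rpow_le_rpow (norm_nonneg _) (hupper n) (by positivity)
end

section
/- Let B = L²(ℝ), let χ : ℝ → [0,2] be a smooth function with support contained in [−1,1] and χ(0) = 2, and let h : [0,∞) → [0,∞) be a strictly increasing continuous function with h(0) = 0. Define 𝓕 : B → B by (𝓕(u))(x) = χ(x)·u(x − h(‖u‖_{L²})). Then for every u₀ ∈ B, the sequence defined by u_{n+1} = 𝓕(u_n) satisfies ‖u_n‖_{L²} → 0 as n → ∞. -/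
open MeasureTheory

/-- If `f` vanishes almost everywhere to the left of `a`, then its translate by `s` vanishes almost
everywhere to the left of `a + s`. -/
lemma ae_translate_eq_zero_of_lt {f : ℝ → ℝ} {a : ℝ} (s : ℝ)
    (hf : ∀ᵐ x ∂(volume : Measure ℝ), x < a → f x = 0) :
    ∀ᵐ x ∂(volume : Measure ℝ), x < a + s → f (x - s) = 0 := by
  filter_upwards [(measurePreserving_sub_right volume s).quasiMeasurePreserving.ae hf] with x hx hlt
  exact hx (by linarith)

/-- A function strictly increasing on `[0, ∞)` reflects convergence to its value at `0`. -/
lemma tendsto_zero_of_strictMonoOn {h : ℝ → ℝ} (hh_mono : StrictMonoOn h (Set.Ici 0))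
    (hh0 : h 0 = 0) {a : ℕ → ℝ} (ha : ∀ n, 0 ≤ a n)
    (hlim : Filter.Tendsto (fun n => h (a n)) Filter.atTop (nhds 0)) :
    Filter.Tendsto a Filter.atTop (nhds 0) := by
  refine tendsto_order.2 ⟨fun b hb => .of_forall fun n => hb.trans_le (ha n), fun b hb => ?_⟩
  have hpos : 0 < h b := hh0 ▸ hh_mono Set.self_mem_Ici hb.le hb
  filter_upwards [hlim.eventually_lt_const hpos] with n hn
  exact (hh_mono.lt_iff_lt (ha n) hb.le).1 hn

/-- for the map `𝓕(u)(x) = χ(x) u(x - h(‖u‖))` on `L²(ℝ)`, every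
orbit of the iteration `u_{n+1} = 𝓕(u_n)` converges to zero in norm. -/
theorem stmt_4 (χ : ℝ → ℝ) (hχ_smooth : ContDiff ℝ (⊤ : ℕ∞) χ)
    (hχ_range : ∀ x, χ x ∈ Set.Icc (0 : ℝ) 2)
    (hχ_supp : Function.support χ ⊆ Set.Icc (-1 : ℝ) 1)
    (hχ0 : χ 0 = 2)
    (h : ℝ → ℝ) (hh_mono : StrictMonoOn h (Set.Ici 0))
    (hh_cont : ContinuousOn h (Set.Ici 0))
    (hh_nonneg : ∀ s : ℝ, 0 ≤ s → 0 ≤ h s) (hh0 : h 0 = 0)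
    (F : Lp ℝ 2 (volume : Measure ℝ) → Lp ℝ 2 (volume : Measure ℝ))
    (hF : ∀ u : Lp ℝ 2 (volume : Measure ℝ),
      (F u : ℝ → ℝ) =ᵐ[volume] fun x => χ x * (u : ℝ → ℝ) (x - h ‖u‖)) :
    ∀ u : ℕ → Lp ℝ 2 (volume : Measure ℝ),
      (∀ n, u (n + 1) = F (u n)) →
      Filter.Tendsto (fun n => ‖u n‖) Filter.atTop (nhds 0) := by
  intro u hu
  have hχ_zero : ∀ x, x ∉ Set.Icc (-1 : ℝ) 1 → χ x = 0 := fun x hx =>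
    Function.notMem_support.1 fun hx' => hx (hχ_supp hx')
  have hstep (n : ℕ) : (u (n + 1) : ℝ → ℝ) =ᵐ[volume]
      fun x => χ x * (u n : ℝ → ℝ) (x - h ‖u n‖) := hu n ▸ hF (u n)
  have hnonneg (n : ℕ) : 0 ≤ h ‖u (n + 1)‖ := hh_nonneg _ (norm_nonneg _)
  -- The left end of the support moves right by the total shift accumulated so far.
  have hleft (n : ℕ) : ∀ᵐ x ∂(volume : Measure ℝ),
      x < -1 + ∑ k ∈ Finset.range n, h ‖u (k + 1)‖ → (u (n + 1) : ℝ → ℝ) x = 0 := by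
    induction n with
    | zero =>
      filter_upwards [hstep 0] with x hx hlt
      rw [hx, hχ_zero x fun hmem => ?_, zero_mul]
      simp only [Finset.range_zero, Finset.sum_empty, add_zero] at hlt
      exact hlt.not_ge hmem.1
    | succ n ih =>
      filter_upwards [hstep (n + 1), ae_translate_eq_zero_of_lt (h ‖u (n + 1)‖) ih] with x hx htr hlt
      rw [Finset.sum_range_succ, ← add_assoc] at hlt
      rw [hx, htr hlt, mul_zero]
  have hvanish (n : ℕ) (hn : 2 < ∑ k ∈ Finset.range n, h ‖u (k + 1)‖) : u (n + 1) = 0 := by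
    rw [Lp.eq_zero_iff_ae_eq_zero]
    filter_upwards [hstep n, hleft n] with x hx hl
    by_cases hx1 : x ≤ 1
    · exact hl (by linarith)
    · rw [hx, hχ_zero x fun hmem => hx1 hmem.2, zero_mul, Pi.zero_apply]
  rw [← Filter.tendsto_add_atTop_iff_nat 1]
  by_cases hbig : ∃ N, 2 < ∑ k ∈ Finset.range N, h ‖u (k + 1)‖
  · obtain ⟨N, hN⟩ := hbig
    refine tendsto_const_nhds.congr' ?_
    filter_upwards [Filter.eventually_ge_atTop N] with n hn
    have hle := Finset.sum_le_sum_of_subset_of_nonneg (Finset.range_subset_range.2 hn)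
      fun k _ _ => hnonneg k
    rw [hvanish n (hN.trans_le hle), norm_zero]
  · push Not at hbig
    exact tendsto_zero_of_strictMonoOn hh_mono hh0 (fun n => norm_nonneg _)
      (summable_of_sum_range_le hnonneg hbig).tendsto_atTop_zero
end

section
/- Let B = L²(ℝ), let χ : ℝ → [0,2] be a smooth function with support contained in [−1,1] and χ(0) = 2, and let h : [0,∞) → [0,∞) be a strictly increasing continuous function with h(0) = 0. Define 𝓕 : B → B by (𝓕(u))(x) = χ(x)·u(x − h(‖u‖_{L²})), and let (u_n) be the sequence u_{n+1} = 𝓕(u_n) starting from any u₀ ∈ B. Then for every ε > 0, the set I_ε = {n ≥ 1 : ‖u_n‖_{L²} ≥ ε} is finite, with cardinality at most 2/h(ε) + 1. -/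
open MeasureTheory

/-- Every iterate vanishes to the left of `-1` plus the total shift accumulated since time `1`. -/
lemma ae_eq_zero_of_lt_sum_shift {χ h : ℝ → ℝ}
    (hχ_supp : Function.support χ ⊆ Set.Icc (-1 : ℝ) 1)
    {F : Lp ℝ 2 (volume : Measure ℝ) → Lp ℝ 2 (volume : Measure ℝ)}
    (hF : ∀ u : Lp ℝ 2 (volume : Measure ℝ),
      (F u : ℝ → ℝ) =ᵐ[volume] fun x => χ x * (u : ℝ → ℝ) (x - h ‖u‖))
    {u : ℕ → Lp ℝ 2 (volume : Measure ℝ)} (hu : ∀ n, u (n + 1) = F (u n))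
    {n : ℕ} (hn : 1 ≤ n) :
    ∀ᵐ x : ℝ, x < -1 + ∑ k ∈ Finset.Ico 1 n, h ‖u k‖ → (u n : ℝ → ℝ) x = 0 := by
  induction n, hn using Nat.le_induction with
  | base =>
    rw [hu 0]
    filter_upwards [hF (u 0)] with x hx hlt
    have hχx : χ x = 0 := by
      by_contra hne
      have := (hχ_supp hne).1
      simp at hlt
      linarith
    rw [hx, hχx, zero_mul]
  | succ n hn ih =>
    have ih' := (measurePreserving_sub_right volume (h ‖u n‖)).quasiMeasurePreserving.ae ih
    rw [hu n]
    filter_upwards [hF (u n), ih'] with x hx hzero hlt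
    rw [Finset.sum_Ico_succ_top hn] at hlt
    rw [hx, hzero (by linarith), mul_zero]

/-- The total shift accumulated before a nonzero iterate is at most the length of `[-1, 1]`. -/
lemma sum_shift_le_two {χ h : ℝ → ℝ}
    (hχ_supp : Function.support χ ⊆ Set.Icc (-1 : ℝ) 1)
    {F : Lp ℝ 2 (volume : Measure ℝ) → Lp ℝ 2 (volume : Measure ℝ)}
    (hF : ∀ u : Lp ℝ 2 (volume : Measure ℝ),
      (F u : ℝ → ℝ) =ᵐ[volume] fun x => χ x * (u : ℝ → ℝ) (x - h ‖u‖))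
    {u : ℕ → Lp ℝ 2 (volume : Measure ℝ)} (hu : ∀ n, u (n + 1) = F (u n))
    {n : ℕ} (hn : 1 ≤ n) (hne : u n ≠ 0) :
    ∑ k ∈ Finset.Ico 1 n, h ‖u k‖ ≤ 2 := by
  by_contra! hlt
  apply hne
  rw [Lp.eq_zero_iff_ae_eq_zero]
  have hleft := ae_eq_zero_of_lt_sum_shift hχ_supp hF hu hn
  obtain ⟨m, rfl⟩ := Nat.exists_eq_add_of_le' hn
  have hFm := hF (u m)
  rw [← hu m] at hFm
  filter_upwards [hleft, hFm] with x hzero hx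
  by_cases hx1 : x ≤ 1
  · exact hzero (by linarith)
  · have hχx : χ x = 0 := by
      by_contra hχx
      exact hx1 (hχ_supp hχx).2
    rw [hx, hχx, zero_mul, Pi.zero_apply]

/-- A set all of whose finite subsets have at most `C` elements is finite, with at
most `C` elements. -/
lemma finite_and_ncard_le_of_forall_finset {α : Type*} {s : Set α} {C : ℝ}
    (hs : ∀ t : Finset α, (t : Set α) ⊆ s → (t.card : ℝ) ≤ C) :
    s.Finite ∧ (s.ncard : ℝ) ≤ C := by
  have hfin : s.Finite := by
    by_contra hinf
    obtain ⟨N, hN⟩ := exists_nat_gt C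
    obtain ⟨t, hts, htN⟩ := Set.Infinite.exists_subset_card_eq hinf N
    have := hs t hts
    rw [htN] at this
    linarith
  refine ⟨hfin, ?_⟩
  rw [Set.ncard_eq_toFinset_card s hfin]
  exact hs _ (by simp)

/-- for the map `𝓕(u)(x) = χ(x) u(x - h(‖u‖))` on `L²(ℝ)`, the set
`I_ε = {n ≥ 1 : ‖u_n‖ ≥ ε}` is finite, with cardinality at most `2/h(ε) + 1`. -/
theorem stmt_5 (χ : ℝ → ℝ) (hχ_smooth : ContDiff ℝ (⊤ : ℕ∞) χ)
    (hχ_range : ∀ x, χ x ∈ Set.Icc (0 : ℝ) 2)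
    (hχ_supp : Function.support χ ⊆ Set.Icc (-1 : ℝ) 1)
    (hχ0 : χ 0 = 2)
    (h : ℝ → ℝ) (hh_mono : StrictMonoOn h (Set.Ici 0))
    (hh_cont : ContinuousOn h (Set.Ici 0))
    (hh_nonneg : ∀ s : ℝ, 0 ≤ s → 0 ≤ h s) (hh0 : h 0 = 0)
    (F : Lp ℝ 2 (volume : Measure ℝ) → Lp ℝ 2 (volume : Measure ℝ))
    (hF : ∀ u : Lp ℝ 2 (volume : Measure ℝ),
      (F u : ℝ → ℝ) =ᵐ[volume] fun x => χ x * (u : ℝ → ℝ) (x - h ‖u‖))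
    (u : ℕ → Lp ℝ 2 (volume : Measure ℝ)) (hu : ∀ n, u (n + 1) = F (u n))
    (ε : ℝ) (hε : 0 < ε) :
    {n : ℕ | 1 ≤ n ∧ ε ≤ ‖u n‖}.Finite ∧
      ({n : ℕ | 1 ≤ n ∧ ε ≤ ‖u n‖}.ncard : ℝ) ≤ 2 / h ε + 1 := by
  have hpos : 0 < h ε := by
    simpa [hh0] using hh_mono Set.self_mem_Ici hε.le hε
  apply finite_and_ncard_le_of_forall_finset
  intro t ht
  rcases t.eq_empty_or_nonempty with rfl | hne
  · simpa using (by positivity : 0 ≤ 2 / h ε + 1)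
  have hmax := t.max'_mem hne
  obtain ⟨hmax1, hmaxε⟩ := ht hmax
  have hsum := sum_shift_le_two hχ_supp hF hu hmax1 (norm_pos_iff.mp (hε.trans_le hmaxε))
  have hsub : t.erase (t.max' hne) ⊆ Finset.Ico 1 (t.max' hne) := fun k hk =>
    Finset.mem_Ico.mpr
      ⟨(ht (Finset.mem_of_mem_erase hk)).1, t.lt_max'_of_mem_erase_max' hne hk⟩
  have hcard : ((t.card : ℝ) - 1) * h ε ≤ 2 := by
    calc ((t.card : ℝ) - 1) * h ε = ∑ _k ∈ t.erase (t.max' hne), h ε := by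
          rw [Finset.sum_const, nsmul_eq_mul, Finset.cast_card_erase_of_mem hmax]
      _ ≤ ∑ k ∈ t.erase (t.max' hne), h ‖u k‖ := Finset.sum_le_sum fun k hk =>
          hh_mono.monotoneOn hε.le (norm_nonneg _) (ht (Finset.mem_of_mem_erase hk)).2
      _ ≤ ∑ k ∈ Finset.Ico 1 (t.max' hne), h ‖u k‖ :=
          Finset.sum_le_sum_of_subset_of_nonneg hsub fun k _ _ => hh_nonneg _ (norm_nonneg _)
      _ ≤ 2 := hsum
  have := (le_div_iff₀ hpos).mpr hcard
  linarith
end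

section
/- Let B = L²(ℝ), let χ : ℝ → [0,2] be a smooth function with support contained in [−1,1] and χ(0) = 2, and let h : [0,∞) → [0,∞) be a strictly increasing continuous function with h(0) = 0. Define 𝓕 : B → B by (𝓕(u))(x) = χ(x)·u(x − h(‖u‖_{L²})). Then for every δ > 0 and every u₀ ∈ B with ‖u₀‖_{L²} ≤ δ, the sequence u_{n+1} = 𝓕(u_n) satisfies sup_{n ∈ ℕ} ‖u_n‖_{L²} ≤ δ · 2^{2/h(δ) + 1}. -/
open MeasureTheory

/-- Translating by `a` and multiplying by a function with values in `[0, 2]` at most doubles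
the `L²` norm. -/
theorem norm_le_two_mul_of_ae_eq_mul_translate {χ : ℝ → ℝ}
    (hχ : ∀ x, χ x ∈ Set.Icc (0 : ℝ) 2) (a : ℝ) {u v : Lp ℝ 2 (volume : Measure ℝ)}
    (hv : (v : ℝ → ℝ) =ᵐ[volume] fun x => χ x * (u : ℝ → ℝ) (x - a)) :
    ‖v‖ ≤ 2 * ‖u‖ := by
  have hmp : MeasurePreserving (fun x : ℝ => x - a) volume volume :=
    measurePreserving_sub_right volume a
  rw [← Lp.norm_compMeasurePreserving u hmp]
  refine Lp.norm_le_mul_norm_of_ae_le_mul ?_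
  filter_upwards [hv, Lp.coeFn_compMeasurePreserving u hmp] with x hx hx'
  rw [hx, hx', norm_mul, Real.norm_of_nonneg (hχ x).1]
  exact mul_le_mul_of_nonneg_right (hχ x).2 (norm_nonneg _)

/-- If `u` vanishes to the left of `c`, then a multiple of its translate by `a` vanishes to the
left of `c + a`. -/
theorem ae_eq_zero_of_lt_add_of_ae_eq_mul_translate {χ u v : ℝ → ℝ} {a c : ℝ}
    (hv : v =ᵐ[volume] fun x => χ x * u (x - a))
    (hu : ∀ᵐ x : ℝ, x < c → u x = 0) :
    ∀ᵐ x : ℝ, x < c + a → v x = 0 := by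
  have hmp : MeasurePreserving (fun x : ℝ => x - a) volume volume :=
    measurePreserving_sub_right volume a
  filter_upwards [hv, hmp.quasiMeasurePreserving.ae hu] with x hx hx' hlt
  rw [hx, hx' (by linarith), mul_zero]

/-- Along an orbit, each term either has norm at most `δ`, or was reached by `m + 1` successive
steps from such a term, the last `m` of which pushed the support right by at least `h δ`. -/
theorem norm_le_or_exists_ae_eq_zero_outside {χ : ℝ → ℝ}
    (hχ_range : ∀ x, χ x ∈ Set.Icc (0 : ℝ) 2)
    (hχ_supp : Function.support χ ⊆ Set.Icc (-1 : ℝ) 1)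
    {h : ℝ → ℝ} (hh_mono : StrictMonoOn h (Set.Ici 0))
    {δ : ℝ} (hδ : 0 < δ) {u : ℕ → Lp ℝ 2 (volume : Measure ℝ)}
    (hu : ∀ n, (u (n + 1) : ℝ → ℝ) =ᵐ[volume]
      fun x => χ x * (u n : ℝ → ℝ) (x - h ‖u n‖))
    (hu0 : ‖u 0‖ ≤ δ) (n : ℕ) :
    ‖u n‖ ≤ δ ∨ ∃ m : ℕ, ‖u n‖ ≤ δ * 2 ^ (m + 1) ∧
      (∀ᵐ x : ℝ, x < -1 + m * h δ → (u n : ℝ → ℝ) x = 0) ∧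
      ∀ᵐ x : ℝ, 1 < x → (u n : ℝ → ℝ) x = 0 := by
  have hχ_zero : ∀ x, x ∉ Set.Icc (-1 : ℝ) 1 → χ x = 0 := fun x hx =>
    Function.notMem_support.mp fun hx' => hx (hχ_supp hx')
  induction n with
  | zero => exact Or.inl hu0
  | succ n ih =>
    right
    have hnorm := norm_le_two_mul_of_ae_eq_mul_translate hχ_range _ (hu n)
    have hright : ∀ᵐ x : ℝ, 1 < x → (u (n + 1) : ℝ → ℝ) x = 0 := by
      filter_upwards [hu n] with x hx hlt
      rw [hx, hχ_zero x fun hx' => hlt.not_ge hx'.2, zero_mul]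
    by_cases hn : ‖u n‖ ≤ δ
    · refine ⟨0, by rw [zero_add, pow_one]; linarith, ?_, hright⟩
      filter_upwards [hu n] with x hx hlt
      rw [hx, hχ_zero x fun hx' => hx'.1.not_gt (by simpa using hlt), zero_mul]
    · obtain ⟨m, hm, hleft, -⟩ := ih.resolve_left hn
      have hshift : h δ ≤ h ‖u n‖ :=
        hh_mono.monotoneOn hδ.le (norm_nonneg _) (not_le.mp hn).le
      refine ⟨m + 1, by rw [pow_succ]; linarith, ?_, hright⟩
      filter_upwards [ae_eq_zero_of_lt_add_of_ae_eq_mul_translate (hu n) hleft] with x hx hlt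
      refine hx ?_
      push_cast at hlt
      linarith

/-- for the map `𝓕(u)(x) = χ(x) u(x - h(‖u‖))` on `L²(ℝ)`, any orbit
starting with `‖u₀‖ ≤ δ` satisfies `sup_n ‖u_n‖ ≤ δ · 2^{2/h(δ)+1}`. -/
theorem stmt_6 (χ : ℝ → ℝ) (hχ_smooth : ContDiff ℝ (⊤ : ℕ∞) χ)
    (hχ_range : ∀ x, χ x ∈ Set.Icc (0 : ℝ) 2)
    (hχ_supp : Function.support χ ⊆ Set.Icc (-1 : ℝ) 1)
    (hχ0 : χ 0 = 2)
    (h : ℝ → ℝ) (hh_mono : StrictMonoOn h (Set.Ici 0))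
    (hh_cont : ContinuousOn h (Set.Ici 0))
    (hh_nonneg : ∀ s : ℝ, 0 ≤ s → 0 ≤ h s) (hh0 : h 0 = 0)
    (F : Lp ℝ 2 (volume : Measure ℝ) → Lp ℝ 2 (volume : Measure ℝ))
    (hF : ∀ u : Lp ℝ 2 (volume : Measure ℝ),
      (F u : ℝ → ℝ) =ᵐ[volume] fun x => χ x * (u : ℝ → ℝ) (x - h ‖u‖)) :
    ∀ δ > (0 : ℝ), ∀ u : ℕ → Lp ℝ 2 (volume : Measure ℝ),
      (∀ n, u (n + 1) = F (u n)) → ‖u 0‖ ≤ δ →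
      ∀ n : ℕ, ‖u n‖ ≤ δ * 2 ^ (2 / h δ + 1) := by
  intro δ hδ u hu hu0 n
  have hpos : 0 < h δ := hh0 ▸ hh_mono Set.self_mem_Ici hδ.le hδ
  have hstep : ∀ n, (u (n + 1) : ℝ → ℝ) =ᵐ[volume]
      fun x => χ x * (u n : ℝ → ℝ) (x - h ‖u n‖) := fun n => hu n ▸ hF (u n)
  by_cases hn : ‖u n‖ ≤ δ
  · exact hn.trans (le_mul_of_one_le_right hδ.le
      (Real.one_le_rpow one_le_two (by positivity)))
  obtain ⟨m, hm, hleft, hright⟩ := (norm_le_or_exists_ae_eq_zero_outside hχ_range hχ_supp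
    hh_mono hδ hstep hu0 n).resolve_left hn
  have hm2 : m * h δ ≤ 2 := by
    by_contra! hlt
    have hzero : u n = 0 := by
      rw [Lp.eq_zero_iff_ae_eq_zero]
      filter_upwards [hleft, hright] with x hxl hxr
      rcases le_or_gt x 1 with hx | hx
      · exact hxl (by linarith)
      · exact hxr hx
    exact hn (by simpa [hzero] using hδ.le)
  refine hm.trans (mul_le_mul_of_nonneg_left ?_ hδ.le)
  rw [← Real.rpow_natCast]
  refine Real.rpow_le_rpow_of_exponent_le one_le_two ?_
  push_cast
  gcongr
  exact (le_div_iff₀ hpos).mpr hm2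
end

section
/- Let u₀ : [−1,0] → ℝ be a nondecreasing continuous function with u₀(−1) = 0 (hence u₀ ≥ 0), and set C = (1 − e^{−3})^{−1/2}. Then for every t ≥ 1, every α ∈ [0,1], and every x₀ ∈ [−1,0] satisfying x₀ + u₀(x₀)²·(e^{3t} − 1) ≤ 0 (i.e. x₀ lies on a characteristic that has not yet exited through x = 0), one has e^t · u₀(x₀) ≤ C^{1−α} · e^{(3α−1)t/2} · (max_{−1 ≤ x ≤ 0} u₀(x))^α. In particular, for 0 < α < 1/3 the right-hand side tends to 0 as t → ∞, which expresses nonlinear asymptotic stability of the zero solution of the quasilinear conservation law u_t + ((−x + u²)u)_x = 0 on [−1,0] with boundary condition u(−1,t) = 0, whose solution for nondecreasing data is given along characteristics by u(X(t), t) = e^t u₀(x₀) with X(t) = e^{−t}(x₀ + u₀(x₀)²(e^{3t} − 1)). -/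
/-- A value carried by a characteristic still inside the domain at time `t ≥ 1`
is at most `(1 - e⁻³)^(-1/2) e^(-3t/2)`. -/
theorem le_rpow_mul_exp_of_characteristic_nonpos {x v t : ℝ} (hx : -1 ≤ x)
    (ht : 1 ≤ t) (h : x + v ^ 2 * (Real.exp (3 * t) - 1) ≤ 0) :
    v ≤ (1 - Real.exp (-3)) ^ (-(1 : ℝ) / 2) * Real.exp (-(3 * t / 2)) := by
  have hd : 0 < 1 - Real.exp (-3) := by
    have : Real.exp (-3) < 1 := Real.exp_lt_one_iff.2 (by norm_num)
    linarith
  have hsq : ((1 - Real.exp (-3)) ^ (-(1 : ℝ) / 2)) ^ 2 = (1 - Real.exp (-3))⁻¹ := by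
    rw [← Real.rpow_natCast, ← Real.rpow_mul hd.le, ← Real.rpow_neg_one]
    norm_num
  have hexp : Real.exp (-(3 * t / 2)) ^ 2 = (Real.exp (3 * t))⁻¹ := by
    rw [← Real.exp_nat_mul, ← Real.exp_neg]
    congr 1
    push_cast
    ring
  have hlow : (1 - Real.exp (-3)) * Real.exp (3 * t) ≤ Real.exp (3 * t) - 1 := by
    have : 1 ≤ Real.exp (-3) * Real.exp (3 * t) := by
      rw [← Real.exp_add]
      exact Real.one_le_exp (by linarith)
    linarith
  refine (abs_le_of_sq_le_sq' ?_ (by positivity)).2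
  rw [mul_pow, hsq, hexp, ← mul_inv, ← one_div, le_div_iff₀ (by positivity)]
  nlinarith [mul_le_mul_of_nonneg_left hlow (sq_nonneg v)]

/-- decay along characteristics for the conservation law
`u_t + ((-x + u²)u)_x = 0` on `[-1,0]` with nondecreasing data: for `t ≥ 1`,
`α ∈ [0,1]` and characteristics still inside the domain,
`e^t u₀(x₀) ≤ C^{1-α} e^{(3α-1)t/2} (max u₀)^α` with `C = (1 - e^{-3})^{-1/2}`. -/
theorem stmt_9 (u₀ : ℝ → ℝ) (hmono : MonotoneOn u₀ (Set.Icc (-1 : ℝ) 0))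
    (hcont : ContinuousOn u₀ (Set.Icc (-1 : ℝ) 0)) (hu₀ : u₀ (-1) = 0)
    (C : ℝ) (hC : C = (1 - Real.exp (-3)) ^ (-(1 : ℝ) / 2)) :
    ∀ t : ℝ, 1 ≤ t → ∀ α ∈ Set.Icc (0 : ℝ) 1, ∀ x₀ ∈ Set.Icc (-1 : ℝ) 0,
      x₀ + (u₀ x₀) ^ 2 * (Real.exp (3 * t) - 1) ≤ 0 →
      Real.exp t * u₀ x₀ ≤
        C ^ (1 - α) * Real.exp ((3 * α - 1) * t / 2) *
          (sSup (u₀ '' Set.Icc (-1 : ℝ) 0)) ^ α := by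
  intro t ht α ⟨hα0, hα1⟩ x₀ hx₀ h
  have hv : 0 ≤ u₀ x₀ := hu₀ ▸ hmono (by simp) hx₀ hx₀.1
  have hM : u₀ x₀ ≤ sSup (u₀ '' Set.Icc (-1 : ℝ) 0) :=
    le_csSup (isCompact_Icc.image_of_continuousOn hcont).bddAbove ⟨x₀, hx₀, rfl⟩
  have hvC : u₀ x₀ ≤ C * Real.exp (-(3 * t / 2)) :=
    hC ▸ le_rpow_mul_exp_of_characteristic_nonpos hx₀.1 ht h
  have hC0 : 0 ≤ C := by
    rw [hC]
    exact Real.rpow_nonneg (sub_nonneg.2 (Real.exp_le_one_iff.2 (by norm_num))) _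
  calc Real.exp t * u₀ x₀
      = Real.exp t * (u₀ x₀ ^ (1 - α) * u₀ x₀ ^ α) := by
        rw [← Real.rpow_add_of_nonneg hv (by linarith) hα0, sub_add_cancel, Real.rpow_one]
    _ ≤ Real.exp t * ((C * Real.exp (-(3 * t / 2))) ^ (1 - α) *
          sSup (u₀ '' Set.Icc (-1 : ℝ) 0) ^ α) := by
        have : 0 ≤ 1 - α := by linarith
        gcongr
    _ = C ^ (1 - α) * (Real.exp t * Real.exp (-(3 * t / 2) * (1 - α))) *
          sSup (u₀ '' Set.Icc (-1 : ℝ) 0) ^ α := by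
        rw [Real.mul_rpow hC0 (Real.exp_nonneg _), ← Real.exp_mul]
        ring
    _ = C ^ (1 - α) * Real.exp ((3 * α - 1) * t / 2) *
          sSup (u₀ '' Set.Icc (-1 : ℝ) 0) ^ α := by
        rw [← Real.exp_add]
        ring_nf
end

section
/- Let B be a complex Hilbert space, let L : B → B be a bounded normal linear operator with spectral radius r = r(L) > 1, let a > 0, and let α : [0,a] → [0,∞) be a nondecreasing function with ∫₀^a α(s)/s ds < ∞. Let 𝓕 : B → B satisfy 𝓕(0) = 0 and ‖𝓕(u) − Lu‖ ≤ α(‖u‖)·‖u‖ whenever ‖u‖ ≤ a. Fix η ∈ (0,a] such that (2/(r·ln r))·∫₀^η α(s)/s ds ≤ 1/4, let δ > 0 and let N be a positive integer such that 2·r^N·δ ≤ η. Then for every u₀ ∈ B with ‖u₀‖ ≤ δ, the sequence u_{n+1} = 𝓕(u_n) satisfies ‖u_k‖ ≤ 2·r^k·‖u₀‖ for all 0 ≤ k ≤ N. -/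
open MeasureTheory

/-- The operator norm of a normal operator is its spectral radius. -/
theorem norm_eq_of_normal_of_spectralRadius_eq {B : Type*} [NormedAddCommGroup B]
    [InnerProductSpace ℂ B] [CompleteSpace B] (L : B →L[ℂ] B)
    (hnormal : L ∘L ContinuousLinearMap.adjoint L = ContinuousLinearMap.adjoint L ∘L L)
    {r : ℝ} (hr0 : 0 ≤ r) (hr : spectralRadius ℂ L = ENNReal.ofReal r) : ‖L‖ = r := by
  have hL : IsStarNormal L := ⟨hnormal.symm⟩
  have h := hL.spectralRadius_eq_nnnorm
  rw [hr] at h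
  have h' := congrArg ENNReal.toReal h
  rw [ENNReal.toReal_ofReal hr0] at h'
  simpa using h'.symm

/-- A monotone function is bounded on a geometric step by its logarithmic mean. -/
theorem mul_log_le_setIntegral_div {α : ℝ → ℝ} {x r : ℝ} (hx : 0 < x) (hr : 1 < r)
    (hmono : MonotoneOn α (Set.Icc x (x * r)))
    (hint : IntegrableOn (fun s => α s / s) (Set.Ioc x (x * r))) :
    α x * Real.log r ≤ ∫ s in Set.Ioc x (x * r), α s / s := by
  have hxr : x ≤ x * r := le_mul_of_one_le_right hx.le hr.le
  have hinv : IntervalIntegrable (fun s : ℝ => s⁻¹) volume x (x * r) :=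
    intervalIntegrable_inv_iff.2
      (Or.inr (Set.notMem_uIcc_of_lt hx (hx.trans_le hxr)))
  have hconst : ∫ s in Set.Ioc x (x * r), α x * s⁻¹ = α x * Real.log r := by
    rw [integral_const_mul, ← intervalIntegral.integral_of_le hxr,
      integral_inv_of_pos hx (hx.trans_le hxr), mul_div_cancel_left₀ r hx.ne']
  rw [← hconst]
  refine setIntegral_mono_on (hinv.1.const_mul _) hint measurableSet_Ioc fun s hs => ?_
  rw [div_eq_mul_inv]
  exact mul_le_mul_of_nonneg_right
    (hmono (Set.left_mem_Icc.2 hxr) (Set.Ioc_subset_Icc_self hs) hs.1.le)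
    (inv_nonneg.2 (hx.trans hs.1).le)

/-- Comparison of a sum along a geometric progression with the Dini integral. -/
theorem sum_geometric_mul_log_le_setIntegral_div {α : ℝ → ℝ} {c r a : ℝ} (hc : 0 < c)
    (hr : 1 < r) (hmono : MonotoneOn α (Set.Icc 0 a))
    (hnonneg : ∀ s ∈ Set.Icc (0 : ℝ) a, 0 ≤ α s)
    (hint : IntegrableOn (fun s => α s / s) (Set.Ioc 0 a)) (k : ℕ) (hk : c * r ^ k ≤ a) :
    (∑ j ∈ Finset.range k, α (c * r ^ j)) * Real.log r ≤
      ∫ s in Set.Ioc 0 (c * r ^ k), α s / s := by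
  induction k with
  | zero =>
    simp only [Finset.range_zero, Finset.sum_empty, zero_mul]
    exact setIntegral_nonneg measurableSet_Ioc fun s hs =>
      div_nonneg (hnonneg s ⟨hs.1.le, hs.2.trans hk⟩) hs.1.le
  | succ k ih =>
    have hpos : 0 < c * r ^ k := by positivity
    have hsucc : c * r ^ (k + 1) = c * r ^ k * r := by ring
    rw [hsucc] at hk ⊢
    have hle : c * r ^ k ≤ c * r ^ k * r := le_mul_of_one_le_right hpos.le hr.le
    have hstep : IntegrableOn (fun s => α s / s) (Set.Ioc (c * r ^ k) (c * r ^ k * r)) :=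
      hint.mono_set (Set.Ioc_subset_Ioc hpos.le hk)
    rw [Finset.sum_range_succ, add_mul, ← Set.Ioc_union_Ioc_eq_Ioc hpos.le hle,
      setIntegral_union (Set.Ioc_disjoint_Ioc_of_le le_rfl) measurableSet_Ioc
        (hint.mono_set (Set.Ioc_subset_Ioc_right (hle.trans hk))) hstep]
    exact add_le_add (ih (hle.trans hk)) (mul_log_le_setIntegral_div hpos hr
      (hmono.mono (Set.Icc_subset_Icc hpos.le hk)) hstep)

/-- the bootstrap upper bound in the proof of the sharpened
Rutman–Daleckii theorem: under the normality and integrability assumptions, if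
`(2/(r ln r)) ∫₀^η α(s)/s ds ≤ 1/4` and `2 r^N δ ≤ η`, then any orbit starting
with `‖u₀‖ ≤ δ` satisfies `‖u_k‖ ≤ 2 r^k ‖u₀‖` for `0 ≤ k ≤ N`. -/
theorem stmt_12 {B : Type*} [NormedAddCommGroup B] [InnerProductSpace ℂ B]
    [CompleteSpace B]
    (L : B →L[ℂ] B)
    (hnormal : L ∘L ContinuousLinearMap.adjoint L = ContinuousLinearMap.adjoint L ∘L L)
    (r : ℝ) (hr : spectralRadius ℂ L = ENNReal.ofReal r) (hr1 : 1 < r)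
    (a : ℝ) (ha : 0 < a)
    (α : ℝ → ℝ) (hα_mono : MonotoneOn α (Set.Icc 0 a))
    (hα_nonneg : ∀ s ∈ Set.Icc (0 : ℝ) a, 0 ≤ α s)
    (hα_int : IntegrableOn (fun s => α s / s) (Set.Ioc 0 a))
    (F : B → B) (hF0 : F 0 = 0)
    (hF : ∀ u : B, ‖u‖ ≤ a → ‖F u - L u‖ ≤ α ‖u‖ * ‖u‖)
    (η : ℝ) (hη : η ∈ Set.Ioc (0 : ℝ) a)
    (hη_cond : 2 / (r * Real.log r) * ∫ s in Set.Ioc (0 : ℝ) η, α s / s ≤ 1 / 4)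
    (δ : ℝ) (hδ : 0 < δ) (N : ℕ) (hN : 0 < N) (hNδ : 2 * r ^ N * δ ≤ η) :
    ∀ u : ℕ → B, ‖u 0‖ ≤ δ → (∀ n, u (n + 1) = F (u n)) →
      ∀ k ≤ N, ‖u k‖ ≤ 2 * r ^ k * ‖u 0‖ := by
  intro u hu0 hu k hk
  have hr0 : 0 < r := one_pos.trans hr1
  have hL := norm_eq_of_normal_of_spectralRadius_eq L hnormal hr0.le hr
  have hlog : 0 < Real.log r := Real.log_pos hr1
  rcases (norm_nonneg (u 0)).eq_or_lt with hv | hv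
  · have hzero : ∀ n, u n = 0 := by
      intro n
      induction n with
      | zero => exact norm_eq_zero.1 hv.symm
      | succ n ih => rw [hu, ih, hF0]
    simp [hzero]
  set c : ℝ := 2 * ‖u 0‖ with hc
  have hc0 : 0 < c := by positivity
  have hcη : ∀ n ≤ N, c * r ^ n ≤ η := fun n hn => by
    calc c * r ^ n ≤ (2 * δ) * r ^ N := by
          rw [hc]
          gcongr
          exact hr1.le
      _ = 2 * r ^ N * δ := by ring
      _ ≤ η := hNδ
  have hsum : ∀ n ≤ N, 2 / r * ∑ j ∈ Finset.range n, α (c * r ^ j) ≤ 1 / 4 := fun n hn => by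
    have hdini : (∑ j ∈ Finset.range n, α (c * r ^ j)) * Real.log r ≤
        ∫ s in Set.Ioc (0 : ℝ) η, α s / s := by
      refine (sum_geometric_mul_log_le_setIntegral_div hc0 hr1 hα_mono hα_nonneg hα_int n
        ((hcη n hn).trans hη.2)).trans ?_
      refine setIntegral_mono_set (hα_int.mono_set (Set.Ioc_subset_Ioc_right hη.2)) ?_
        (Set.Ioc_subset_Ioc_right (hcη n hn)).eventuallyLE
      filter_upwards [ae_restrict_mem measurableSet_Ioc] with s hs
      exact div_nonneg (hα_nonneg s ⟨hs.1.le, hs.2.trans hη.2⟩) hs.1.le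
    calc 2 / r * ∑ j ∈ Finset.range n, α (c * r ^ j)
        = 2 / (r * Real.log r) *
            ((∑ j ∈ Finset.range n, α (c * r ^ j)) * Real.log r) := by field_simp
      _ ≤ 2 / (r * Real.log r) * ∫ s in Set.Ioc (0 : ℝ) η, α s / s := by gcongr
      _ ≤ 1 / 4 := hη_cond
  have hbound : ∀ n ≤ N, ‖u n‖ ≤ r ^ n * ‖u 0‖ *
      (1 + 2 / r * ∑ j ∈ Finset.range n, α (c * r ^ j)) →
      ‖u n‖ ≤ c * r ^ n := fun n hn h => by
    have hp : 0 < r ^ n * ‖u 0‖ := by positivity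
    rw [hc]
    nlinarith [hsum n hn]
  have hmain : ∀ n ≤ N, ‖u n‖ ≤ r ^ n * ‖u 0‖ *
      (1 + 2 / r * ∑ j ∈ Finset.range n, α (c * r ^ j)) := by
    intro n
    induction n with
    | zero => simp
    | succ n ih =>
      intro hn
      have hn' : n ≤ N := (Nat.le_succ n).trans hn
      have hun := hbound n hn' (ih hn')
      have hca : c * r ^ n ≤ a := (hcη n hn').trans hη.2
      have hα : α ‖u n‖ ≤ α (c * r ^ n) :=
        hα_mono ⟨norm_nonneg _, hun.trans hca⟩ ⟨by positivity, hca⟩ hun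
      have hαc : 0 ≤ α (c * r ^ n) := hα_nonneg _ ⟨by positivity, hca⟩
      calc ‖u (n + 1)‖ = ‖L (u n) + (F (u n) - L (u n))‖ := by
            rw [hu, add_sub_cancel]
        _ ≤ ‖L (u n)‖ + ‖F (u n) - L (u n)‖ := norm_add_le _ _
        _ ≤ r * ‖u n‖ + α ‖u n‖ * ‖u n‖ :=
            add_le_add (hL ▸ L.le_opNorm (u n)) (hF _ (hun.trans hca))
        _ ≤ r * (r ^ n * ‖u 0‖ * (1 + 2 / r * ∑ j ∈ Finset.range n, α (c * r ^ j))) +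
              α (c * r ^ n) * (c * r ^ n) := by
            gcongr
            exact ih hn'
        _ = r ^ (n + 1) * ‖u 0‖ *
              (1 + 2 / r * ∑ j ∈ Finset.range (n + 1), α (c * r ^ j)) := by
            rw [Finset.sum_range_succ]
            generalize α (c * r ^ n) = y
            rw [hc]
            field_simp
            ring
  calc ‖u k‖ ≤ c * r ^ k := hbound k hk (hmain k hk)
    _ = 2 * r ^ k * ‖u 0‖ := by rw [hc]; ring
end

section
/- Let ρ > 1, let a > 0, and let α : [0,∞) → [0,∞) be nondecreasing on [0,a] with α(s) → 0 as s → 0⁺. Consider the scalar map 𝓕 : ℝ → ℝ defined by 𝓕(u) = ρu − α(|u|)·u. If the equilibrium u = 0 of the iteration u_{n+1} = 𝓕(u_n) is exponentially unstable at the rate ρ — i.e. there exist ε > 0 and C > 0 such that for every δ > 0 there is u₀ with 0 < |u₀| ≤ δ whose orbit satisfies |u_n| ≥ C·ρⁿ·|u₀| for all n with max(|u₀|, …, |u_n|) ≤ ε — then ∫₀^a α(s)/s ds < ∞. -/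
open MeasureTheory

theorem intervalIntegrable_div_self_of_monotoneOn {α : ℝ → ℝ} {a x y : ℝ}
    (hα : MonotoneOn α (Set.Icc 0 a)) (hx : 0 < x) (hxy : x ≤ y) (hy : y ≤ a) :
    IntervalIntegrable (fun s => α s / s) volume x y := by
  have hmono : IntervalIntegrable α volume x y := by
    apply MonotoneOn.intervalIntegrable
    rw [Set.uIcc_of_le hxy]
    exact hα.mono (Set.Icc_subset_Icc hx.le hy)
  simp only [div_eq_mul_inv]
  refine hmono.mul_continuousOn (continuousOn_inv₀.mono fun s hs => ?_)
  rw [Set.uIcc_of_le hxy] at hs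
  exact (hx.trans_le hs.1).ne'

theorem integral_div_self_le_of_monotoneOn {α : ℝ → ℝ} {a x y : ℝ}
    (hα : MonotoneOn α (Set.Icc 0 a)) (hx : 0 < x) (hxy : x ≤ y) (hy : y ≤ a) :
    ∫ s in x..y, α s / s ≤ α y * (Real.log y - Real.log x) := by
  have hy0 : 0 < y := hx.trans_le hxy
  have hconst : IntervalIntegrable (fun s => α y / s) volume x y :=
    intervalIntegrable_div_self_of_monotoneOn (α := fun _ => α y) (a := a)
      (fun _ _ _ _ _ => le_rfl) hx hxy hy
  calc ∫ s in x..y, α s / s ≤ ∫ s in x..y, α y / s := by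
        refine intervalIntegral.integral_mono_on hxy
          (intervalIntegrable_div_self_of_monotoneOn hα hx hxy hy) hconst fun s hs => ?_
        have hs0 : 0 < s := hx.trans_le hs.1
        have : α s ≤ α y := hα ⟨hs0.le, hs.2.trans hy⟩ ⟨hy0.le, hy⟩ hs.2
        gcongr
    _ = α y * (Real.log y - Real.log x) := by
        simp only [div_eq_mul_inv]
        rw [intervalIntegral.integral_const_mul, integral_inv_of_pos hx hy0,
          Real.log_div hy0.ne' hx.ne']

/-- Along a positive orbit of `v ↦ (ρ - α v) v` in `[0, b]` that stays above `C ρⁿ v₀` and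
leaves `[0, b]` in one more step, the integral of `α s / s` up to `b` is bounded independently of
the starting point. -/
theorem integral_div_self_le_of_orbit {ρ a b C : ℝ} {α : ℝ → ℝ} {v : ℕ → ℝ} {n : ℕ}
    (hρ : 1 < ρ) (hC : 0 < C) (hb : 0 < b) (hba : b ≤ a)
    (hα : MonotoneOn α (Set.Icc 0 a)) (hα0 : ∀ s, 0 ≤ s → 0 ≤ α s)
    (hαb : α b ≤ (ρ - 1) / 2) (hv0 : 0 < v 0)
    (hv : ∀ k ≤ n, 0 < v k → v (k + 1) = (ρ - α (v k)) * v k)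
    (hvb : ∀ k ≤ n, v k ≤ b) (hexit : b < v (n + 1)) (hgrow : C * ρ ^ n * v 0 ≤ v n) :
    ∫ s in (v 0)..b, α s / s ≤ Real.log ρ * (2 * α b - ρ * Real.log C) := by
  have hρ0 : 0 < ρ := by linarith
  have hlogρ : 0 < Real.log ρ := Real.log_pos hρ
  have hle : ∀ s, 0 < s → s ≤ b → α s ≤ α b := fun s hs hsb =>
    hα ⟨hs.le, hsb.trans hba⟩ ⟨hb.le, hba⟩ hsb
  have hstep : ∀ k ≤ n, 0 < v k → v k ≤ v (k + 1) ∧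
      Real.log (v (k + 1)) ≤ Real.log (v k) + Real.log ρ - α (v k) / ρ := by
    intro k hk hvk
    have h1 := hle _ hvk (hvb k hk)
    have hpos : 0 < ρ - α (v k) := by linarith
    rw [hv k hk hvk]
    refine ⟨le_mul_of_one_le_left hvk.le (by linarith), ?_⟩
    rw [Real.log_mul hpos.ne' hvk.ne']
    have h2 := Real.log_le_sub_one_of_pos (div_pos hpos hρ0)
    rw [Real.log_div hpos.ne' hρ0.ne', sub_div, div_self hρ0.ne'] at h2
    linarith
  have hpos : ∀ k ≤ n, 0 < v k ∧ v 0 ≤ v k := by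
    intro k
    induction k with
    | zero => exact fun _ => ⟨hv0, le_rfl⟩
    | succ k ih =>
      intro hk
      obtain ⟨h1, h2⟩ := ih (by omega)
      have h3 := (hstep k (by omega) h1).1
      exact ⟨h1.trans_le h3, h2.trans h3⟩
  have hlogstep : ∀ k ≤ n, Real.log (v (k + 1)) - Real.log (v k) ≤ Real.log ρ := by
    intro k hk
    have h1 := (hstep k hk (hpos k hk).1).2
    have h2 : 0 ≤ α (v k) / ρ := div_nonneg (hα0 _ (hpos k hk).1.le) hρ0.le
    linarith
  have hmain : ∀ k ≤ n, ∫ s in (v 0)..(v k), α s / s ≤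
      Real.log ρ * (α (v k) + ρ * (Real.log (v 0) + k * Real.log ρ - Real.log (v k))) := by
    intro k
    induction k with
    | zero =>
      intro _
      simpa using mul_nonneg hlogρ.le (hα0 _ hv0.le)
    | succ k ih =>
      intro hk
      have hk' : k ≤ n := by omega
      obtain ⟨hk0, hk1⟩ := hpos k hk'
      obtain ⟨h1, h2⟩ := hstep k hk' hk0
      have hsucc : v (k + 1) ≤ a := (hvb _ hk).trans hba
      rw [← intervalIntegral.integral_add_adjacent_intervals
        (intervalIntegrable_div_self_of_monotoneOn hα hv0 hk1 (h1.trans hsucc))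
        (intervalIntegrable_div_self_of_monotoneOn hα hk0 h1 hsucc)]
      have h3 := integral_div_self_le_of_monotoneOn hα hk0 h1 hsucc
      have h4 := mul_le_mul_of_nonneg_left (hlogstep k hk') (hα0 _ (hk0.trans_le h1).le)
      have h5 : α (v k) ≤ ρ * (Real.log (v k) + Real.log ρ - Real.log (v (k + 1))) := by
        rw [← div_le_iff₀' hρ0]
        linarith
      have h6 := mul_le_mul_of_nonneg_left h5 hlogρ.le
      push_cast
      linarith [ih hk']
  obtain ⟨hn0, hn1⟩ := hpos n le_rfl
  have hlogC : Real.log C + n * Real.log ρ + Real.log (v 0) ≤ Real.log (v n) := by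
    rw [← Real.log_pow, ← Real.log_mul hC.ne' (by positivity),
      ← Real.log_mul (by positivity) hv0.ne']
    exact Real.log_le_log (by positivity) hgrow
  have htail := integral_div_self_le_of_monotoneOn hα hn0 (hvb n le_rfl) hba
  have htail' : α b * (Real.log b - Real.log (v n)) ≤ α b * Real.log ρ := by
    refine mul_le_mul_of_nonneg_left ?_ (hα0 _ hb.le)
    linarith [hlogstep n le_rfl, Real.log_le_log hb hexit.le]
  rw [← intervalIntegral.integral_add_adjacent_intervals
    (intervalIntegrable_div_self_of_monotoneOn hα hv0 hn1 ((hvb n le_rfl).trans hba))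
    (intervalIntegrable_div_self_of_monotoneOn hα hn0 (hvb n le_rfl) hba)]
  have h7 : α (v n) + ρ * (Real.log (v 0) + n * Real.log ρ - Real.log (v n)) ≤
      α b - ρ * Real.log C := by
    have := mul_le_mul_of_nonneg_left hlogC hρ0.le
    linarith [hle _ hn0 (hvb n le_rfl)]
  linarith [hmain n le_rfl, mul_le_mul_of_nonneg_left h7 hlogρ.le]

/-- A positive sequence that grows at least geometrically while in `[0, b]` has a first exit. -/
theorem exists_first_exit {r b : ℝ} {v : ℕ → ℝ} (hr : 1 < r) (hv0 : 0 < v 0) (hvb : v 0 ≤ b)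
    (hv : ∀ k, 0 < v k → v k ≤ b → r * v k ≤ v (k + 1)) :
    ∃ n, (∀ k ≤ n, v k ≤ b) ∧ b < v (n + 1) := by
  classical
  have hex : ∃ n, b < v n := by
    by_contra! hall
    have hgeom : ∀ n, r ^ n * v 0 ≤ v n := by
      intro n
      induction n with
      | zero => simp
      | succ n ih =>
        have hn : 0 < v n := lt_of_lt_of_le (by positivity) ih
        have h1 := hv n hn (hall n)
        have h2 := mul_le_mul_of_nonneg_left ih (zero_le_one.trans hr.le)
        rw [pow_succ']
        linarith
    obtain ⟨n, hn⟩ := pow_unbounded_of_one_lt (b / v 0) hr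
    rw [div_lt_iff₀ hv0] at hn
    linarith [hgeom n, hall n]
  have hne : Nat.find hex ≠ 0 := by
    intro h
    have := Nat.find_spec hex
    rw [h] at this
    linarith
  obtain ⟨n, hn⟩ := Nat.exists_eq_succ_of_ne_zero hne
  refine ⟨n, fun k hk => not_lt.1 (Nat.find_min hex (by omega)), ?_⟩
  have := Nat.find_spec hex
  rwa [hn] at this

/-- for the scalar map `𝓕(u) = ρu - α(|u|)u` with `α` nondecreasing
on `[0,a]` and `α(s) → 0` as `s → 0⁺`, exponential instability of the origin at
the linear rate `ρ` implies the integrability condition `∫₀^a α(s)/s ds < ∞`. -/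
theorem stmt_14 (ρ a : ℝ) (hρ : 1 < ρ) (ha : 0 < a)
    (α : ℝ → ℝ) (hα_mono : MonotoneOn α (Set.Icc 0 a))
    (hα_nonneg : ∀ s : ℝ, 0 ≤ s → 0 ≤ α s)
    (hα_lim : Filter.Tendsto α (nhdsWithin 0 (Set.Ioi 0)) (nhds 0))
    (hinst : ∃ ε > (0 : ℝ), ∃ C > (0 : ℝ), ∀ δ > (0 : ℝ), ∃ u : ℕ → ℝ,
      (∀ n, u (n + 1) = ρ * u n - α |u n| * u n) ∧ 0 < |u 0| ∧ |u 0| ≤ δ ∧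
      ∀ n : ℕ, (∀ k ≤ n, |u k| ≤ ε) → C * ρ ^ n * |u 0| ≤ |u n|) :
    IntegrableOn (fun s => α s / s) (Set.Ioc 0 a) := by
  obtain ⟨ε, hε, C, hC, hinst⟩ := hinst
  obtain ⟨b, ⟨hαb, hbmin⟩, hb⟩ : ∃ b, (α b < (ρ - 1) / 2 ∧ b < min ε a) ∧ 0 < b := by
    have h1 := hα_lim.eventually (gt_mem_nhds (show (0 : ℝ) < (ρ - 1) / 2 by linarith))
    have h2 : ∀ᶠ s in nhdsWithin (0 : ℝ) (Set.Ioi 0), s < min ε a :=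
      nhdsWithin_le_nhds (gt_mem_nhds (lt_min hε ha))
    exact ((h1.and h2).and self_mem_nhdsWithin).exists
  obtain ⟨hbε, hba⟩ := lt_min_iff.1 hbmin
  have hbound : ∀ δ > 0, ∃ x, 0 < x ∧ x ≤ δ ∧ x ≤ b ∧
      ∫ s in x..b, α s / s ≤ Real.log ρ * (2 * α b - ρ * Real.log C) := by
    intro δ hδ
    obtain ⟨u, hu, hu0, huδ, hgrow⟩ := hinst (min δ b) (lt_min hδ hb)
    have hub : |u 0| ≤ b := huδ.trans (min_le_right _ _)
    have hα_le : ∀ k, |u k| ≤ b → α |u k| ≤ α b := fun k hk =>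
      hα_mono ⟨abs_nonneg _, hk.trans hba.le⟩ ⟨hb.le, hba.le⟩ hk
    have hrec : ∀ k, |u k| ≤ b → |u (k + 1)| = (ρ - α |u k|) * |u k| := by
      intro k hk
      have h1 := hα_le k hk
      rw [hu, ← sub_mul, abs_mul, abs_of_pos (by linarith : 0 < ρ - α |u k|)]
    obtain ⟨n, hn, hexit⟩ := exists_first_exit (v := fun k => |u k|) (r := (ρ + 1) / 2)
      (by linarith) hu0 hub (by
        intro k _ hk
        rw [hrec k hk]
        have h1 := hα_le k hk
        exact mul_le_mul_of_nonneg_right (by linarith) (abs_nonneg _))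
    exact ⟨|u 0|, hu0, huδ.trans (min_le_left _ _), hub,
      integral_div_self_le_of_orbit (v := fun k => |u k|) hρ hC hb hba.le hα_mono hα_nonneg
        hαb.le hu0 (fun k hk _ => hrec k (hn k hk)) hn hexit
        (hgrow n fun k hk => (hn k hk).trans hbε.le)⟩
  choose x hx0 hxδ hxb hxI using fun i : ℕ => hbound (1 / ((i : ℝ) + 1)) (by positivity)
  have hx_lim : Filter.Tendsto x Filter.atTop (nhds 0) :=
    squeeze_zero (fun i => (hx0 i).le) hxδ tendsto_one_div_add_atTop_nhds_zero_nat
  have hnear : IntegrableOn (fun s => α s / s) (Set.Ioc 0 b) := by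
    refine integrableOn_Ioc_of_intervalIntegral_norm_bounded_left
      (I := Real.log ρ * (2 * α b - ρ * Real.log C)) (fun i => ?_) hx_lim
      (Filter.Eventually.of_forall fun i => ?_)
    · exact (intervalIntegrable_div_self_of_monotoneOn hα_mono (hx0 i) (hxb i) hba.le).1
    · rw [← intervalIntegral.integral_of_le (hxb i)]
      refine (intervalIntegral.integral_congr fun s hs => ?_).trans_le (hxI i)
      rw [Set.uIcc_of_le (hxb i)] at hs
      have hs0 : 0 ≤ s := (hx0 i).le.trans hs.1
      exact Real.norm_of_nonneg (div_nonneg (hα_nonneg s hs0) hs0)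
  have hfar : IntegrableOn (fun s => α s / s) (Set.Ioc b a) :=
    (intervalIntegrable_div_self_of_monotoneOn hα_mono hb hba.le le_rfl).1
  rw [← Set.Ioc_union_Ioc_eq_Ioc hb.le hba.le]
  exact hnear.union hfar
end

section
/- Let B₁ and B₂ be Banach spaces with B₁ ≠ {0}, let ρ > 1, and let L₁ : B₁ → B₁ and L₂ : B₂ → B₂ be bounded linear operators with ‖L₁v‖ ≥ ρ‖v‖ for all v ∈ B₁ and ‖L₂w‖ ≤ ρ‖w‖ for all w ∈ B₂. Let 𝓝₁ : B₁ × B₂ → B₁ and 𝓝₂ : B₁ × B₂ → B₂ satisfy 𝓝₁(0,0) = 0 and 𝓝₂(0,0) = 0, and define α(r) = sup{ (‖𝓝₁(v,w)‖ + ‖𝓝₂(v,w)‖)/‖v‖ : 0 < ‖v‖ ≤ r, ‖w‖ ≤ ‖v‖ }. If for some a > 0 the integrability condition ∫₀^a α(s)/s ds < ∞ holds, then the origin (0,0) is an unstable equilibrium (in the sense of Lyapunov) of the system v_{n+1} = L₁v_n + 𝓝₁(v_n,w_n), w_{n+1} = L₂w_n + 𝓝₂(v_n,w_n). -/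
open scoped ENNReal

open MeasureTheory Set in
/-- If `f s ≥ e` on `(x, σ x]`, then `e (σ - 1) / σ` is at most the increment of the integral of
`f s / s` over `(0, x]` when `x` is replaced by any `y ≥ σ x`. -/
lemma toReal_setLIntegral_div_add_le {f : ℝ → ℝ≥0∞} {σ x y e : ℝ} (hσ : 1 < σ) (hx : 0 < x)
    (he : 0 ≤ e) (hxy : σ * x ≤ y) (hf : ∀ s, x < s → ENNReal.ofReal e ≤ f s)
    (hfin : ∫⁻ s in Ioc (0 : ℝ) y, f s / ENNReal.ofReal s ≠ ⊤) :
    (∫⁻ s in Ioc (0 : ℝ) x, f s / ENNReal.ofReal s).toReal + e * ((σ - 1) / σ) ≤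
      (∫⁻ s in Ioc (0 : ℝ) y, f s / ENNReal.ofReal s).toReal := by
  have hσ0 : 0 < σ := by linarith
  have hxσ : x ≤ σ * x := by nlinarith
  have hk : 0 ≤ (σ - 1) / σ := div_nonneg (by linarith) hσ0.le
  have hbound : ENNReal.ofReal (e * ((σ - 1) / σ)) ≤
      ∫⁻ s in Ioc x (σ * x), f s / ENNReal.ofReal s := by
    calc ENNReal.ofReal (e * ((σ - 1) / σ))
        = ENNReal.ofReal (e / (σ * x)) * ENNReal.ofReal (σ * x - x) := by
          rw [← ENNReal.ofReal_mul (by positivity)]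
          congr 1
          field_simp
      _ = ∫⁻ _ in Ioc x (σ * x), ENNReal.ofReal (e / (σ * x)) := by
          rw [setLIntegral_const, Real.volume_Ioc]
      _ ≤ ∫⁻ s in Ioc x (σ * x), f s / ENNReal.ofReal s := by
          refine setLIntegral_mono' measurableSet_Ioc fun s hs => ?_
          rw [ENNReal.ofReal_div_of_pos (by positivity)]
          exact ENNReal.div_le_div (hf s hs.1) (ENNReal.ofReal_le_ofReal hs.2)
  have hsum : (∫⁻ s in Ioc (0 : ℝ) x, f s / ENNReal.ofReal s) + ENNReal.ofReal (e * ((σ - 1) / σ)) ≤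
      ∫⁻ s in Ioc (0 : ℝ) y, f s / ENNReal.ofReal s := by
    calc _ ≤ (∫⁻ s in Ioc (0 : ℝ) x, f s / ENNReal.ofReal s) +
          ∫⁻ s in Ioc x (σ * x), f s / ENNReal.ofReal s := by gcongr
      _ = ∫⁻ s in Ioc (0 : ℝ) (σ * x), f s / ENNReal.ofReal s := by
          rw [← lintegral_union measurableSet_Ioc
            (Ioc_disjoint_Ioc_of_le le_rfl), Ioc_union_Ioc_eq_Ioc hx.le hxσ]
      _ ≤ _ := lintegral_mono_set (Ioc_subset_Ioc_right hxy)
  have hx_fin : ∫⁻ s in Ioc (0 : ℝ) x, f s / ENNReal.ofReal s ≠ ⊤ :=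
    ne_top_of_le_ne_top hfin (le_self_add.trans hsum)
  have h := ENNReal.toReal_mono hfin hsum
  rwa [ENNReal.toReal_add hx_fin ENNReal.ofReal_ne_top,
    ENNReal.toReal_ofReal (mul_nonneg he hk)] at h

open MeasureTheory Set in
/-- Integrability on `(0, a]` makes the integral over `(0, b]` arbitrarily small for small `b`. -/
lemma exists_toReal_setLIntegral_Ioc_le {g : ℝ → ℝ≥0∞} {a c : ℝ} (ha : 0 < a) (hc : 0 < c)
    (hfin : ∫⁻ s in Ioc (0 : ℝ) a, g s ≠ ⊤) :
    ∃ b > 0, ∫⁻ s in Ioc (0 : ℝ) b, g s ≠ ⊤ ∧ (∫⁻ s in Ioc (0 : ℝ) b, g s).toReal ≤ c := by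
  obtain ⟨η, hη, hsmall⟩ := exists_pos_setLIntegral_lt_of_measure_lt hfin
    (ε := ENNReal.ofReal c) (by simpa using hc)
  obtain ⟨d, hd, hdη⟩ : ∃ d : ℝ, 0 < d ∧ ENNReal.ofReal d < η := by
    obtain ⟨d, hd, hdη⟩ := ENNReal.lt_iff_exists_nnreal_btwn.1 hη
    exact ⟨d, by simpa using hd, by simpa using hdη⟩
  have hlt : ∫⁻ s in Ioc (0 : ℝ) (min a d), g s < ENNReal.ofReal c := by
    have hsub : Ioc (0 : ℝ) (min a d) ⊆ Ioc 0 a := Ioc_subset_Ioc_right (min_le_left _ _)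
    have h := hsmall (Ioc 0 (min a d)) (lt_of_le_of_lt ?_ hdη)
    · rwa [Measure.restrict_restrict measurableSet_Ioc, inter_eq_left.2 hsub] at h
    · refine (Measure.restrict_apply_le _ _).trans ?_
      rw [Real.volume_Ioc, sub_zero]
      exact ENNReal.ofReal_le_ofReal (min_le_right _ _)
  exact ⟨min a d, lt_min ha hd, hlt.ne_top, ENNReal.toReal_le_of_le_ofReal hc.le hlt.le⟩

/-- One step of the recursion inside the cone `‖w‖ ≤ ‖v‖`, in terms of the norms `x, y` of the
current point, the norms `x', y'` of the next one and the relative size `e` of the nonlinearity. -/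
lemma cone_step {ρ x y x' y' e z : ℝ} (hρ : 1 < ρ) (hx : 0 < x) (he : 0 ≤ e)
    (heρ : e ≤ (ρ - 1) / 2) (hz : 0 ≤ z) (hz1 : z ≤ 1) (hy : y ≤ z * x)
    (hx' : ρ * x - e * x ≤ x') (hy' : y' ≤ ρ * y + e * x) :
    (ρ + 1) / 2 * x ≤ x' ∧ y' ≤ (z + 2 * e) * x' := by
  refine ⟨by nlinarith, ?_⟩
  have hscalar : ρ * z + e ≤ (z + 2 * e) * (ρ - e) := by
    nlinarith [mul_nonneg he (sub_nonneg.2 hz1), mul_nonneg he (sub_nonneg.2 heρ),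
      mul_nonneg he (sub_nonneg.2 hρ.le)]
  calc y' ≤ ρ * (z * x) + e * x := by nlinarith
    _ = (ρ * z + e) * x := by ring
    _ ≤ (z + 2 * e) * (ρ - e) * x := by gcongr
    _ = (z + 2 * e) * (ρ * x - e * x) := by ring
    _ ≤ (z + 2 * e) * x' := by gcongr

/-- instability for the coupled system
`v_{n+1} = L₁v_n + 𝓝₁(v_n,w_n)`, `w_{n+1} = L₂w_n + 𝓝₂(v_n,w_n)` when
`‖L₁v‖ ≥ ρ‖v‖`, `‖L₂w‖ ≤ ρ‖w‖` with `ρ > 1` and the cone-restricted size `α` of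
the nonlinearity satisfies `∫₀^a α(s)/s ds < ∞`. -/
theorem stmt_15 {B₁ B₂ : Type*}
    [NormedAddCommGroup B₁] [NormedSpace ℝ B₁] [CompleteSpace B₁] [Nontrivial B₁]
    [NormedAddCommGroup B₂] [NormedSpace ℝ B₂] [CompleteSpace B₂]
    (ρ : ℝ) (hρ : 1 < ρ)
    (L₁ : B₁ →L[ℝ] B₁) (L₂ : B₂ →L[ℝ] B₂)
    (hL₁ : ∀ v : B₁, ρ * ‖v‖ ≤ ‖L₁ v‖) (hL₂ : ∀ w : B₂, ‖L₂ w‖ ≤ ρ * ‖w‖)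
    (N₁ : B₁ × B₂ → B₁) (N₂ : B₁ × B₂ → B₂)
    (hN₁0 : N₁ (0, 0) = 0) (hN₂0 : N₂ (0, 0) = 0)
    (α : ℝ → ℝ≥0∞)
    (hα : ∀ r : ℝ, α r = ⨆ (q : B₁ × B₂)
      (_ : 0 < ‖q.1‖ ∧ ‖q.1‖ ≤ r ∧ ‖q.2‖ ≤ ‖q.1‖),
      ENNReal.ofReal ((‖N₁ q‖ + ‖N₂ q‖) / ‖q.1‖))
    (a : ℝ) (ha : 0 < a)
    (hint : ∫⁻ s in Set.Ioc (0 : ℝ) a, α s / ENNReal.ofReal s < ⊤) :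
    ∃ ε > (0 : ℝ), ∀ δ > (0 : ℝ), ∃ v : ℕ → B₁, ∃ w : ℕ → B₂,
      (∀ n, v (n + 1) = L₁ (v n) + N₁ (v n, w n)) ∧
      (∀ n, w (n + 1) = L₂ (w n) + N₂ (v n, w n)) ∧
      0 < ‖(v 0, w 0)‖ ∧ ‖(v 0, w 0)‖ ≤ δ ∧ ∃ n : ℕ, ε ≤ ‖(v n, w n)‖ := by
  set σ : ℝ := (ρ + 1) / 2 with hσdef
  have hσ : 1 < σ := by linarith
  set k : ℝ := (σ - 1) / σ
  have hk : 0 < k := div_pos (by linarith) (by linarith)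
  have hρ1 : 0 < ρ - 1 := by linarith
  set c : ℝ := min (k / 2) (k * (ρ - 1) / 2)
  have hc : 0 < c := by positivity
  obtain ⟨b, hb, hbfin, hbc⟩ := exists_toReal_setLIntegral_Ioc_le ha hc hint.ne
  set F : ℝ → ℝ := fun t =>
    (∫⁻ s in Set.Ioc (0 : ℝ) t, α s / ENNReal.ofReal s).toReal
  have hF0 : ∀ t, 0 ≤ F t := fun t => ENNReal.toReal_nonneg
  have hFfin : ∀ t ≤ b, ∫⁻ s in Set.Ioc (0 : ℝ) t, α s / ENNReal.ofReal s ≠ ⊤ := fun t ht =>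
    ne_top_of_le_ne_top hbfin
      (MeasureTheory.lintegral_mono_set (Set.Ioc_subset_Ioc_right ht))
  have hFc : ∀ t ≤ b, F t ≤ c := fun t ht =>
    (ENNReal.toReal_mono hbfin
      (MeasureTheory.lintegral_mono_set (Set.Ioc_subset_Ioc_right ht))).trans hbc
  have hincr : ∀ (q : B₁ × B₂) (t : ℝ), 0 < ‖q.1‖ → ‖q.2‖ ≤ ‖q.1‖ → σ * ‖q.1‖ ≤ t → t ≤ b →
      F ‖q.1‖ + (‖N₁ q‖ + ‖N₂ q‖) / ‖q.1‖ * k ≤ F t := by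
    intro q t hq0 hq ht htb
    refine toReal_setLIntegral_div_add_le hσ hq0 (by positivity) ht (fun s hs => ?_) (hFfin t htb)
    rw [hα]
    exact le_iSup₂_of_le q ⟨hq0, hs.le, hq⟩ le_rfl
  refine ⟨b / σ, by positivity, fun δ hδ => ?_⟩
  obtain ⟨v₀, hv₀⟩ := exists_norm_eq B₁ hδ.le
  let u : ℕ → B₁ × B₂ := fun n =>
    (fun q : B₁ × B₂ => (L₁ q.1 + N₁ q, L₂ q.2 + N₂ q))^[n] (v₀, 0)
  have hu : ∀ n, u (n + 1) = (L₁ (u n).1 + N₁ (u n), L₂ (u n).2 + N₂ (u n)) := fun n =>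
    Function.iterate_succ_apply' _ _ _
  refine ⟨fun n => (u n).1, fun n => (u n).2, fun n => by simp [hu], fun n => by simp [hu],
    ?_, ?_, ?_⟩
  · simpa [u, hv₀] using hδ
  · simp [u, Prod.norm_def, hv₀, hδ.le]
  by_contra! hsmall
  have hlt : ∀ n, σ * ‖(u n).1‖ < b := fun n => by
    have h := (norm_fst_le (u n)).trans_lt (hsmall n)
    rwa [lt_div_iff₀' (by linarith)] at h
  have hle : ∀ n, ‖(u n).1‖ ≤ b := fun n => by
    nlinarith [hlt n, norm_nonneg (u n).1]
  have hinv : ∀ n, δ * σ ^ n ≤ ‖(u n).1‖ ∧ ‖(u n).2‖ ≤ 2 / k * F ‖(u n).1‖ * ‖(u n).1‖ := by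
    intro n
    induction n with
    | zero =>
      simp only [u, Function.iterate_zero, id, pow_zero, mul_one, hv₀, norm_zero, le_refl, true_and]
      have := hF0 δ
      positivity
    | succ n ih =>
      obtain ⟨hgrow, hcone⟩ := ih
      have hx : 0 < ‖(u n).1‖ := lt_of_lt_of_le (by positivity) hgrow
      set e : ℝ := (‖N₁ (u n)‖ + ‖N₂ (u n)‖) / ‖(u n).1‖
      have he0 : 0 ≤ e := by positivity
      have hex : e * ‖(u n).1‖ = ‖N₁ (u n)‖ + ‖N₂ (u n)‖ := div_mul_cancel₀ _ hx.ne'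
      have hz0 : 0 ≤ 2 / k * F ‖(u n).1‖ := mul_nonneg (by positivity) (hF0 _)
      have hz1 : 2 / k * F ‖(u n).1‖ ≤ 1 := by
        have := (hFc _ (hle n)).trans (min_le_left _ _)
        rw [div_mul_eq_mul_div, div_le_one hk]
        linarith
      have hyx : ‖(u n).2‖ ≤ ‖(u n).1‖ := hcone.trans (mul_le_of_le_one_left hx.le hz1)
      have heρ : e ≤ (ρ - 1) / 2 := by
        have h₁ := hincr (u n) _ hx hyx le_rfl (hlt n).le
        have h₂ := (hFc _ (hlt n).le).trans (min_le_right _ _)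
        have h₃ := hF0 ‖(u n).1‖
        refine le_of_mul_le_mul_right ?_ hk
        linarith
      have hx' : ρ * ‖(u n).1‖ - e * ‖(u n).1‖ ≤ ‖(u (n + 1)).1‖ := by
        rw [hu, hex]
        have h := norm_sub_le_norm_add (L₁ (u n).1) (N₁ (u n))
        linarith [hL₁ (u n).1, norm_nonneg (N₂ (u n))]
      have hy' : ‖(u (n + 1)).2‖ ≤ ρ * ‖(u n).2‖ + e * ‖(u n).1‖ := by
        rw [hu, hex]
        have h := norm_add_le (L₂ (u n).2) (N₂ (u n))
        linarith [hL₂ (u n).2, norm_nonneg (N₁ (u n))]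
      obtain ⟨hstep, hstep'⟩ := cone_step hρ hx he0 heρ hz0 hz1 hcone hx' hy'
      refine ⟨?_, hstep'.trans ?_⟩
      · calc δ * σ ^ (n + 1) = σ * (δ * σ ^ n) := by ring
          _ ≤ σ * ‖(u n).1‖ := by gcongr
          _ ≤ _ := hstep
      · have h := hincr (u n) _ hx hyx hstep (hle (n + 1))
        gcongr
        calc 2 / k * F ‖(u n).1‖ + 2 * e = 2 / k * (F ‖(u n).1‖ + e * k) := by field_simp
          _ ≤ _ := by gcongr
  obtain ⟨n, hn⟩ := pow_unbounded_of_one_lt (b / δ) hσ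
  rw [div_lt_iff₀' hδ] at hn
  exact absurd ((hinv n).1.trans (hle n)) (not_le.2 hn)
end

section
/- Let ρ > 1, let a > 0, let α : [0,a] → [0,∞) be a nondecreasing function with ∫₀^a α(s)/s ds < ∞, and let C > 1/(ρ·ln ρ). Define β(r) = C·r·∫₀^r α(s)/s ds for r ∈ [0,a]. Then there exists r₀ ∈ (0, a/ρ] such that for all r ∈ [0, r₀]: β(r) ≤ r and ρ·β(r) + r·α(r) ≤ β(ρr − r·α(r)). -/
open MeasureTheory

open Set Filter Topology

/-- Over `(0, t r]` with `t ≥ 1`, the integral of `α s / s` for monotone `α` gains at least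
`α r * log t` over its value on `(0, r]`. -/
lemma setIntegral_div_add_mul_log_le {a : ℝ} {α : ℝ → ℝ} (hα_mono : MonotoneOn α (Icc 0 a))
    (hα_int : IntegrableOn (fun s => α s / s) (Ioc 0 a))
    {r t : ℝ} (hr : 0 < r) (ht : 1 ≤ t) (hta : t * r ≤ a) :
    (∫ s in Ioc 0 r, α s / s) + α r * Real.log t ≤ ∫ s in Ioc 0 (t * r), α s / s := by
  have hrt : r ≤ t * r := le_mul_of_one_le_left hr.le ht
  have hint : IntegrableOn (fun s => α s / s) (Ioc r (t * r)) :=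
    hα_int.mono_set (Ioc_subset_Ioc hr.le hta)
  have hsplit : ∫ s in Ioc 0 (t * r), α s / s
      = (∫ s in Ioc 0 r, α s / s) + ∫ s in Ioc r (t * r), α s / s := by
    rw [← Ioc_union_Ioc_eq_Ioc hr.le hrt]
    exact setIntegral_union (Ioc_disjoint_Ioc_of_le le_rfl) measurableSet_Ioc
      (hα_int.mono_set (Ioc_subset_Ioc_right (hrt.trans hta))) hint
  have hnotin : (0 : ℝ) ∉ uIcc r (t * r) := by
    rw [uIcc_of_le hrt]
    exact fun h => hr.not_ge h.1
  have hlog : ∫ s in Ioc r (t * r), α r * s⁻¹ = α r * Real.log t := by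
    rw [← intervalIntegral.integral_of_le hrt, intervalIntegral.integral_const_mul,
      integral_inv hnotin, mul_div_cancel_right₀ _ hr.ne']
  have hinv : IntegrableOn (fun s => α r * s⁻¹) (Ioc r (t * r)) :=
    ((intervalIntegrable_iff_integrableOn_Ioc_of_le hrt).1
      (intervalIntegrable_inv_iff.2 (Or.inr hnotin))).const_mul _
  have hle : ∫ s in Ioc r (t * r), α r * s⁻¹ ≤ ∫ s in Ioc r (t * r), α s / s := by
    refine setIntegral_mono_on hinv hint measurableSet_Ioc fun s hs => ?_
    have hs0 : 0 < s := hr.trans hs.1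
    rw [div_eq_mul_inv]
    exact mul_le_mul_of_nonneg_right
      (hα_mono ⟨hr.le, hrt.trans hta⟩ ⟨hs0.le, hs.2.trans hta⟩ hs.1.le) (inv_nonneg.2 hs0.le)
  linarith

lemma tendsto_setIntegral_Ioc_zero {a : ℝ} (ha : 0 < a) {f : ℝ → ℝ}
    (hf : IntegrableOn f (Ioc 0 a)) :
    Tendsto (fun r => ∫ s in Ioc 0 r, f s) (𝓝[>] 0) (𝓝 0) := by
  have hcont := intervalIntegral.continuousOn_primitive
    ((integrableOn_Icc_iff_integrableOn_Ioc (by finiteness)).2 hf)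
  have h := (hcont 0 ⟨le_rfl, ha.le⟩).tendsto
  simp only [Ioc_self, Measure.restrict_empty, integral_zero_measure] at h
  refine h.mono_left ?_
  rw [← nhdsWithin_Ioc_eq_nhdsGT ha]
  exact nhdsWithin_mono _ Ioc_subset_Icc_self

/-- A monotone nonnegative `α` with `α s / s` integrable at `0` tends to `0` at `0⁺`. -/
lemma tendsto_zero_of_integrableOn_div {a : ℝ} (ha : 0 < a) {α : ℝ → ℝ}
    (hα_mono : MonotoneOn α (Icc 0 a)) (hα_nonneg : ∀ s ∈ Icc (0 : ℝ) a, 0 ≤ α s)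
    (hα_int : IntegrableOn (fun s => α s / s) (Ioc 0 a)) :
    Tendsto α (𝓝[>] 0) (𝓝 0) := by
  have hlog : 0 < Real.log 2 := Real.log_pos one_lt_two
  have hscale : Tendsto (fun r : ℝ => 2 * r) (𝓝[>] 0) (𝓝[>] 0) := by
    refine tendsto_nhdsWithin_iff.2 ⟨?_, ?_⟩
    · have : Tendsto (fun r : ℝ => 2 * r) (𝓝 0) (𝓝 (2 * 0)) := tendsto_id.const_mul 2
      rw [mul_zero] at this
      exact this.mono_left nhdsWithin_le_nhds
    · filter_upwards [self_mem_nhdsWithin] with r hr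
      exact mul_pos two_pos (mem_Ioi.1 hr)
  have hbound := ((tendsto_setIntegral_Ioc_zero ha hα_int).comp hscale).div_const (Real.log 2)
  rw [zero_div] at hbound
  have hmem : ∀ᶠ r in 𝓝[>] (0 : ℝ), r ∈ Ioo 0 (a / 2) := Ioo_mem_nhdsGT (half_pos ha)
  refine squeeze_zero' ?_ ?_ hbound
  · filter_upwards [hmem] with r hr
    exact hα_nonneg r ⟨hr.1.le, by linarith [hr.2]⟩
  · filter_upwards [hmem] with r hr
    have h := setIntegral_div_add_mul_log_le hα_mono hα_int hr.1 one_le_two (by linarith [hr.2])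
    have hI : 0 ≤ ∫ s in Ioc 0 r, α s / s := setIntegral_nonneg measurableSet_Ioc fun s hs =>
      div_nonneg (hα_nonneg s ⟨hs.1.le, by linarith [hs.2, hr.1, hr.2]⟩) hs.1.le
    rw [le_div_iff₀ hlog]
    simp only [Function.comp_apply]
    linarith

/-- solvability of the functional inequality
`ρβ(r) + rα(r) ≤ β(ρr - rα(r))` with `β(r) = C r ∫₀^r α(s)/s ds`,
`C > 1/(ρ ln ρ)`, under the integrability condition on `α`. -/
theorem stmt_16 (ρ a C : ℝ) (hρ : 1 < ρ) (ha : 0 < a)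
    (α : ℝ → ℝ) (hα_mono : MonotoneOn α (Set.Icc 0 a))
    (hα_nonneg : ∀ s ∈ Set.Icc (0 : ℝ) a, 0 ≤ α s)
    (hα_int : IntegrableOn (fun s => α s / s) (Set.Ioc 0 a))
    (hC : 1 / (ρ * Real.log ρ) < C)
    (β : ℝ → ℝ)
    (hβ : ∀ r ∈ Set.Icc (0 : ℝ) a, β r = C * r * ∫ s in Set.Ioc (0 : ℝ) r, α s / s) :
    ∃ r₀ ∈ Set.Ioc (0 : ℝ) (a / ρ), ∀ r ∈ Set.Icc (0 : ℝ) r₀,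
      β r ≤ r ∧ ρ * β r + r * α r ≤ β (ρ * r - r * α r) := by
  have hρ0 : 0 < ρ := one_pos.trans hρ
  have hρlog : 0 < ρ * Real.log ρ := mul_pos hρ0 (Real.log_pos hρ)
  have hC0 : 0 < C := (one_div_pos.2 hρlog).trans hC
  have hCρ : 1 < C * (ρ * Real.log ρ) := (div_lt_iff₀ hρlog).1 hC
  have hI := tendsto_setIntegral_Ioc_zero ha hα_int
  have hα := tendsto_zero_of_integrableOn_div ha hα_mono hα_nonneg hα_int
  have ht : Tendsto (fun r => ρ - α r) (𝓝[>] 0) (𝓝 ρ) := by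
    simpa using hα.const_sub ρ
  have hCI : Tendsto (fun r => C * ∫ s in Ioc 0 r, α s / s) (𝓝[>] 0) (𝓝 0) := by
    simpa using hI.const_mul C
  have hgain : Tendsto (fun r => C * ((ρ - α r) * Real.log (ρ - α r))
      - C * ∫ s in Ioc 0 r, α s / s) (𝓝[>] 0) (𝓝 (C * (ρ * Real.log ρ))) := by
    simpa using ((ht.mul (ht.log hρ0.ne')).const_mul C).sub hCI
  obtain ⟨u, hu, hsub⟩ := mem_nhdsGT_iff_exists_Ioc_subset.1
    (((ht.eventually_const_lt hρ).and (hCI.eventually_lt_const one_pos)).and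
      (hgain.eventually_const_lt hCρ))
  refine ⟨min u (a / ρ), ⟨lt_min hu (div_pos ha hρ0), min_le_right _ _⟩, fun r hr => ?_⟩
  rcases hr.1.eq_or_lt with rfl | hr0
  · simp [hβ 0 ⟨le_rfl, ha.le⟩]
  obtain ⟨⟨ht1, hCI1⟩, hgain1⟩ := hsub ⟨hr0, hr.2.trans (min_le_left _ _)⟩
  have hρr : ρ * r ≤ a := by
    rw [mul_comm]
    exact (le_div_iff₀ hρ0).1 (hr.2.trans (min_le_right _ _))
  have hra : r ≤ a := (le_mul_of_one_le_left hr0.le hρ.le).trans hρr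
  have hαr : 0 ≤ α r := hα_nonneg r ⟨hr0.le, hra⟩
  have hta : (ρ - α r) * r ≤ a :=
    (mul_le_mul_of_nonneg_right (sub_le_self ρ hαr) hr0.le).trans hρr
  have ht0 : 0 < ρ - α r := one_pos.trans ht1
  have hkey := setIntegral_div_add_mul_log_le hα_mono hα_int hr0 ht1.le hta
  rw [show ρ * r - r * α r = (ρ - α r) * r by ring, hβ r ⟨hr0.le, hra⟩,
    hβ _ ⟨(mul_pos ht0 hr0).le, hta⟩]
  set J := ∫ s in Ioc 0 r, α s / s
  constructor
  · calc C * r * J = r * (C * J) := by ring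
      _ ≤ r := mul_le_of_le_one_right hr0.le hCI1.le
  · calc ρ * (C * r * J) + r * α r
        ≤ ρ * (C * r * J) + r * α r
          + r * α r * (C * ((ρ - α r) * Real.log (ρ - α r)) - C * J - 1) :=
          le_add_of_nonneg_right (mul_nonneg (mul_nonneg hr0.le hαr) (sub_nonneg.2 hgain1.le))
      _ = C * ((ρ - α r) * r) * (J + α r * Real.log (ρ - α r)) := by ring
      _ ≤ _ := mul_le_mul_of_nonneg_left hkey (mul_pos hC0 (mul_pos ht0 hr0)).le
end

section
/- Let ρ > 1, let r₀ > 0, let α : [0,r₀] → [0,∞) be nondecreasing, and let β : [0, ρr₀] → [0,∞) be a nondecreasing continuous function with β(r) ≤ r for r ∈ [0, ρr₀] which satisfies ρ·β(r) + r·α(r) ≤ β(ρr) for all r ∈ [0, r₀]. Then ∫₀^{r₀} α(r)/r dr < ∞. -/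
open MeasureTheory

/-- A function monotone on `[a, b]` with `0 < a`, divided by the identity, is integrable there. -/
lemma integrableOn_div_id_of_monotoneOn {f : ℝ → ℝ} {a b : ℝ} (ha : 0 < a)
    (hf : MonotoneOn f (Set.Icc a b)) :
    IntegrableOn (fun r => f r / r) (Set.Icc a b) := by
  have hinv : ContinuousOn (fun r : ℝ => r⁻¹) (Set.Icc a b) :=
    continuousOn_inv₀.mono fun x hx => (ha.trans_le hx.1).ne'
  simpa only [div_eq_mul_inv] using
    (hf.integrableOn_isCompact isCompact_Icc).mul_continuousOn hinv isCompact_Icc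

/-- Over `[s, ρ s]`, the integral of `f r / r` is at most `(ρ - 1) f (ρ s)` for `f` nonnegative
and nondecreasing. -/
lemma integral_norm_div_id_le_of_monotoneOn {f : ℝ → ℝ} {s ρ : ℝ} (hs : 0 < s) (hρ : 1 < ρ)
    (hf : MonotoneOn f (Set.Icc s (ρ * s))) (hf0 : ∀ r ∈ Set.Icc s (ρ * s), 0 ≤ f r) :
    ∫ r in s..ρ * s, ‖f r / r‖ ≤ (ρ - 1) * f (ρ * s) := by
  have hle : s ≤ ρ * s := by nlinarith
  have hbound : ∀ r ∈ Set.uIoc s (ρ * s), ‖‖f r / r‖‖ ≤ f (ρ * s) / s := by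
    intro r hr
    rw [Set.uIoc_of_le hle] at hr
    have hr' : r ∈ Set.Icc s (ρ * s) := ⟨hr.1.le, hr.2⟩
    have hfr := hf0 r hr'
    have hfle : f r ≤ f (ρ * s) := hf hr' (Set.right_mem_Icc.2 hle) hr.2
    rw [norm_norm, Real.norm_of_nonneg (div_nonneg hfr (hs.trans hr.1).le)]
    exact div_le_div₀ (hfr.trans hfle) hfle hs hr.1.le
  calc ∫ r in s..ρ * s, ‖f r / r‖
      ≤ ‖∫ r in s..ρ * s, ‖f r / r‖‖ := le_abs_self _
    _ ≤ f (ρ * s) / s * |ρ * s - s| := intervalIntegral.norm_integral_le_of_norm_le_const hbound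
    _ = (ρ - 1) * f (ρ * s) := by
      rw [abs_of_nonneg (sub_nonneg.2 hle)]
      field_simp

/-- necessity of the integrability condition: if a nondecreasing
continuous `β` with `0 ≤ β(r) ≤ r` satisfies `ρβ(r) + rα(r) ≤ β(ρr)` on `[0,r₀]`,
then `∫₀^{r₀} α(r)/r dr < ∞`. -/
theorem stmt_17 (ρ r₀ : ℝ) (hρ : 1 < ρ) (hr₀ : 0 < r₀)
    (α : ℝ → ℝ) (hα_mono : MonotoneOn α (Set.Icc 0 r₀))
    (hα_nonneg : ∀ r ∈ Set.Icc (0 : ℝ) r₀, 0 ≤ α r)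
    (β : ℝ → ℝ) (hβ_mono : MonotoneOn β (Set.Icc 0 (ρ * r₀)))
    (hβ_cont : ContinuousOn β (Set.Icc 0 (ρ * r₀)))
    (hβ_nonneg : ∀ r ∈ Set.Icc (0 : ℝ) (ρ * r₀), 0 ≤ β r)
    (hβ_le : ∀ r ∈ Set.Icc (0 : ℝ) (ρ * r₀), β r ≤ r)
    (hineq : ∀ r ∈ Set.Icc (0 : ℝ) r₀, ρ * β r + r * α r ≤ β (ρ * r)) :
    IntegrableOn (fun r => α r / r) (Set.Ioc 0 r₀) := by
  have hρ0 : 0 < ρ := zero_lt_one.trans hρ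
  let a : ℕ → ℝ := fun n => r₀ / ρ ^ n
  have ha_pos (n : ℕ) : 0 < a n := by positivity
  have ha_le (n : ℕ) : a n ≤ r₀ := div_le_self hr₀.le (one_le_pow₀ hρ.le)
  have ha_succ (n : ℕ) : ρ * a (n + 1) = a n := by
    simp only [a, pow_succ]
    field_simp
  have hint (n : ℕ) : IntegrableOn (fun r => α r / r) (Set.Icc (a n) r₀) :=
    integrableOn_div_id_of_monotoneOn (ha_pos n)
      (hα_mono.mono (Set.Icc_subset_Icc_left (ha_pos n).le))
  have hstep (n : ℕ) : α (a n) ≤ β (ρ * a n) / a n - ρ * (β (a n) / a n) := by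
    have h := hineq (a n) ⟨(ha_pos n).le, ha_le n⟩
    rw [← mul_div_assoc ρ (β (a n)), ← sub_div, le_div_iff₀ (ha_pos n)]
    linarith
  have hsum (n : ℕ) : ∫ r in a n..r₀, ‖α r / r‖ ≤
      (ρ - 1) * (β (ρ * r₀) / r₀ - β (ρ * a n) / a n) := by
    induction n with
    | zero => simp [a]
    | succ n ih =>
      have hle : a (n + 1) ≤ a n := by
        rw [← ha_succ n]
        nlinarith [ha_pos (n + 1)]
      have hsub : Set.Icc (a (n + 1)) (a n) ⊆ Set.Icc 0 r₀ :=
        Set.Icc_subset_Icc (ha_pos _).le (ha_le n)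
      have hpiece := integral_norm_div_id_le_of_monotoneOn (f := α) (ha_pos (n + 1)) hρ
        (by rw [ha_succ]; exact hα_mono.mono hsub)
        (by rw [ha_succ]; exact fun r hr => hα_nonneg r (hsub hr))
      rw [ha_succ] at hpiece
      have h₁ : IntervalIntegrable (fun r => ‖α r / r‖) volume (a (n + 1)) (a n) :=
        (intervalIntegrable_iff_integrableOn_Icc_of_le hle).2
          ((hint (n + 1)).mono_set (Set.Icc_subset_Icc_right (ha_le n))).norm
      have h₂ : IntervalIntegrable (fun r => ‖α r / r‖) volume (a n) r₀ :=
        (intervalIntegrable_iff_integrableOn_Icc_of_le (ha_le n)).2 (hint n).norm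
      rw [← intervalIntegral.integral_add_adjacent_intervals h₁ h₂, ha_succ]
      have hquot : β (a n) / a (n + 1) = ρ * (β (a n) / a n) := by
        have := (ha_pos (n + 1)).ne'
        rw [← ha_succ n]
        field_simp
      rw [hquot]
      have := mul_le_mul_of_nonneg_left (hstep n) (sub_nonneg.2 hρ.le)
      linarith
  have ha_lim : Filter.Tendsto a Filter.atTop (nhds 0) :=
    (tendsto_pow_atTop_atTop_of_one_lt hρ).const_div_atTop r₀
  refine integrableOn_Ioc_of_intervalIntegral_norm_bounded_left
    (I := (ρ - 1) * (β (ρ * r₀) / r₀)) (fun n => (hint n).mono_set Set.Ioc_subset_Icc_self)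
    ha_lim (Filter.Eventually.of_forall fun n => ?_)
  rw [← intervalIntegral.integral_of_le (ha_le n)]
  have hβn : 0 ≤ β (ρ * a n) / a n := div_nonneg
    (hβ_nonneg _ ⟨by have := ha_pos n; positivity, mul_le_mul_of_nonneg_left (ha_le n) hρ0.le⟩)
    (ha_pos n).le
  exact (hsum n).trans (mul_le_mul_of_nonneg_left (sub_le_self _ hβn) (sub_nonneg.2 hρ.le))
end

section
/- Consider the two-dimensional discrete system v_{n+1} = v_n + w_n − v_n³, w_{n+1} = w_n − w_n³. If |v₀| ≤ 1/2 and |w₀| ≤ 1/8, then the solution satisfies |v_n| ≤ max(|v₀|, |w₀|^{1/3}) and |w_n| ≤ |w₀| for all n ∈ ℕ, and moreover |v_n| + |w_n| → 0 as n → ∞. -/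
open Filter Topology

lemma sub_cube_le_sub_cube {x y : ℝ} (hx : 0 ≤ x) (hxy : x ≤ y) (hy : y ≤ 1 / 2) :
    x - x ^ 3 ≤ y - y ^ 3 := by
  have h : 0 ≤ 1 - (x ^ 2 + x * y + y ^ 2) := by nlinarith
  nlinarith [mul_nonneg (sub_nonneg.2 hxy) h]

lemma abs_sub_cube {x : ℝ} (hx : |x| ≤ 1 / 2) : |x - x ^ 3| = |x| - |x| ^ 3 := by
  have h : 0 ≤ 1 - |x| ^ 2 := by nlinarith [abs_nonneg x]
  calc |x - x ^ 3| = |x * (1 - |x| ^ 2)| := by rw [sq_abs]; ring_nf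
    _ = |x| - |x| ^ 3 := by rw [abs_mul, abs_of_nonneg h]; ring

/-- A nonnegative sequence whose decay is driven by `-a³` up to a vanishing perturbation
tends to zero. -/
lemma tendsto_zero_of_le_sub_cube_add {a b : ℕ → ℝ} (ha0 : ∀ n, 0 ≤ a n)
    (ha : ∀ n, a n ≤ 1 / 2) (hab : ∀ n, a (n + 1) ≤ a n - a n ^ 3 + b n)
    (hb : Tendsto b atTop (𝓝 0)) : Tendsto a atTop (𝓝 0) := by
  suffices h : ∀ ε : ℝ, 0 < ε → ε ≤ 1 / 2 → ∀ᶠ n in atTop, a n ≤ ε by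
    refine tendsto_order.2 ⟨fun c hc => .of_forall fun n => hc.trans_le (ha0 n), fun c hc => ?_⟩
    filter_upwards [h (min (c / 2) (1 / 2)) (by positivity) (min_le_right _ _)] with n hn
    linarith [min_le_left (c / 2) (1 / 2 : ℝ)]
  intro ε hε hε2
  have hδ : 0 < ε ^ 3 / 2 := by positivity
  obtain ⟨N, hN⟩ := eventually_atTop.1 (hb.eventually_le_const hδ)
  have key : ∀ k : ℕ, a (N + k) ≤ max ε (1 / 2 - k * (ε ^ 3 / 2)) := by
    intro k
    induction k with
    | zero => simpa using Or.inr (ha N)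
    | succ k ih =>
      set m := max ε (1 / 2 - k * (ε ^ 3 / 2)) with hm
      have hm2 : m ≤ 1 / 2 := max_le hε2 (by linarith [mul_nonneg k.cast_nonneg hδ.le])
      have hεm : ε ^ 3 ≤ m ^ 3 := by gcongr; exact le_max_left _ _
      have hstep : a (N + (k + 1)) ≤ m - ε ^ 3 / 2 := by
        have := hab (N + k)
        rw [add_assoc] at this
        linarith [sub_cube_le_sub_cube (ha0 (N + k)) ih hm2, hN (N + k) (by omega)]
      refine hstep.trans ?_
      rw [sub_le_iff_le_add, hm]
      push_cast
      refine max_le ?_ ?_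
      · linarith [le_max_left ε (1 / 2 - (k + 1 : ℝ) * (ε ^ 3 / 2))]
      · linarith [le_max_right ε (1 / 2 - (k + 1 : ℝ) * (ε ^ 3 / 2))]
  obtain ⟨K, hK⟩ := exists_nat_gt ((1 / 2) / (ε ^ 3 / 2))
  rw [div_lt_iff₀ hδ] at hK
  filter_upwards [eventually_ge_atTop (N + K)] with n hn
  obtain ⟨k, rfl⟩ := Nat.exists_eq_add_of_le (show N ≤ n by omega)
  refine (key k).trans (max_le le_rfl ?_)
  have hKk : (K : ℝ) ≤ k := by exact_mod_cast (show K ≤ k by omega)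
  linarith [mul_le_mul_of_nonneg_right hKk hδ.le]


/-- for the system `v_{n+1} = v_n + w_n - v_n³`,
`w_{n+1} = w_n - w_n³` with `|v₀| ≤ 1/2` and `|w₀| ≤ 1/8`, one has
`|v_n| ≤ max(|v₀|, |w₀|^{1/3})`, `|w_n| ≤ |w₀|` for all `n`, and
`|v_n| + |w_n| → 0`. -/
theorem stmt_18 (v w : ℕ → ℝ)
    (hv : ∀ n, v (n + 1) = v n + w n - (v n) ^ 3)
    (hw : ∀ n, w (n + 1) = w n - (w n) ^ 3)
    (hv0 : |v 0| ≤ 1 / 2) (hw0 : |w 0| ≤ 1 / 8) :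
    (∀ n : ℕ, |v n| ≤ max |v 0| (|w 0| ^ ((1 : ℝ) / 3)) ∧ |w n| ≤ |w 0|) ∧
    Filter.Tendsto (fun n => |v n| + |w n|) Filter.atTop (nhds 0) := by
  set M := max |v 0| (|w 0| ^ ((1 : ℝ) / 3))
  have hcube : (|w 0| ^ ((1 : ℝ) / 3)) ^ 3 = |w 0| := by
    rw [← Real.rpow_natCast, ← Real.rpow_mul (abs_nonneg _)]
    norm_num
  have hM2 : M ≤ 1 / 2 := by
    refine max_le hv0 (le_of_pow_le_pow_left₀ three_ne_zero (by norm_num) ?_)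
    rw [hcube]
    linarith
  have hMw : |w 0| ≤ M ^ 3 := by
    rw [← hcube]
    gcongr
    exact le_max_right _ _
  have hwb : ∀ n, |w n| ≤ |w 0| := by
    intro n
    induction n with
    | zero => exact le_rfl
    | succ n ih =>
      rw [hw, abs_sub_cube (by linarith)]
      linarith [pow_nonneg (abs_nonneg (w n)) 3]
  have hvstep : ∀ n, |v n| ≤ 1 / 2 → |v (n + 1)| ≤ |v n| - |v n| ^ 3 + |w n| := by
    intro n hn
    rw [hv, ← abs_sub_cube hn, add_sub_right_comm]
    exact abs_add_le _ _
  have hvb : ∀ n, |v n| ≤ M := by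
    intro n
    induction n with
    | zero => exact le_max_left _ _
    | succ n ih =>
      linarith [hvstep n (ih.trans hM2), sub_cube_le_sub_cube (abs_nonneg _) ih hM2, hwb n]
  have hwlim : Tendsto (fun n => |w n|) atTop (𝓝 0) := by
    have hw2 : ∀ n, |w n| ≤ 1 / 2 := fun n => by linarith [hwb n]
    refine tendsto_zero_of_le_sub_cube_add (b := 0) (fun n => abs_nonneg _) hw2
      (fun n => ?_) tendsto_const_nhds
    rw [hw, abs_sub_cube (hw2 n)]
    simp
  have hvlim : Tendsto (fun n => |v n|) atTop (𝓝 0) :=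
    tendsto_zero_of_le_sub_cube_add (fun n => abs_nonneg _) (fun n => (hvb n).trans hM2)
      (fun n => hvstep n ((hvb n).trans hM2)) hwlim
  exact ⟨fun n => ⟨hvb n, hwb n⟩, by simpa using hvlim.add hwlim⟩
end
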